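/- Let a ∈ ℝ and let b = 8πp/q where p, q are coprime integers with p ≠ 0 and 1 ≤ q ≤ 5. Write p² = 2^{α₀} · p₁^{α₁} ⋯ p_s^{α_s} · q₁^{β₁} ⋯ q_t^{β_t}, where the p_i are distinct primes ≡ 3 (mod 4) and the q_j are distinct primes ≡ 1 (mod 4). Then the ℂ-vector space 𝒮(a,b) is finite-dimensional and its dimension equals 4·(β₁+1)(β₂+1)⋯(β_t+1) if q = 1; 2·(β₁+1)(β₂+1)⋯(β_t+1) if q = 2; and (β₁+1)(β₂+1)⋯(β_t+1) if q ∈ {3,4,5}. -/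

import Mathlib

/-!
Every function in sight is expanded into Fourier modes of frequency `k` in `t` and `n` in `z`; the
modes are smooth functions of `(x, y)`, periodic in `y` and multiplied by `exp (-2πi n y)` under
`x ↦ x + 1`.

*Modes with `n ≠ 0` vanish.* For the modes `φ`, `γ` of `f`, `g` the system says that two first-order
operators `A` and `B`, adjoint to each other and with `A B = B A - 4πn`, exchange `φ + γ` and
`φ - γ` up to scalars. So `φ + γ` is an eigenvector of `B A`, and by the ladder argument for the
harmonic oscillator the eigenvalue is an integer multiple of `4πn`. For `b` a rational multiple of
`π` this makes `π` a root of a nonzero quadratic polynomial with rational coefficients,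
contradicting its transcendence.

*Modes with `n = 0`* are functions on the `(x, y)`-torus. Their Fourier coefficients at the
frequency `(l, m)` satisfy a `2 × 2` linear system with constant coefficients, which is singular
exactly when `k = 0` and `4π (l² + m²) = b l`, and then has a one-dimensional kernel. Hence the
dimension is the number of integral solutions `(l, m)` of this equation.

*Counting.* For `b = 8πp/q` these solutions correspond to the Gaussian integers
`z = (q l - p) + i q m` of norm `p²`. For `1 ≤ q ≤ 5` the congruence `z ≡ -p` modulo `q` selects
exactly one of the elements `z`, or of `z, i z`, or of `z, i z, -z, -i z`, for `q = 1`, `q = 2`,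
`q ≥ 3` respectively, and there are `4 ∏ (βⱼ + 1)` elements of norm `p²` by factorization in `ℤ[i]`.
-/

open Complex MeasureTheory

noncomputable section

/-- Functions of four real variables `(t, x, y, z)` with complex values. -/
abbrev F4 : Type := ℝ → ℝ → ℝ → ℝ → ℂ

/-- Smoothness of a function of four real variables. -/
def Smooth4 (f : F4) : Prop :=
  ContDiff ℝ (⊤ : ℕ∞) (fun p : ℝ × ℝ × ℝ × ℝ => f p.1 p.2.1 p.2.2.1 p.2.2.2)

/-- The invariance properties identifying smooth functions on `ℝ⁴` with smooth
functions on the Kodaira–Thurston manifold `KT⁴`. -/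
def KTPeriodic (f : F4) : Prop :=
  ∀ t x y z : ℝ,
    f (t + 1) x y z = f t x y z ∧
    f t (x + 1) y (z + y) = f t x y z ∧
    f t x (y + 1) z = f t x y z ∧
    f t x y (z + 1) = f t x y z

/-- Partial derivative in `t`. -/
def pT (f : F4) (t x y z : ℝ) : ℂ := deriv (fun s => f s x y z) t
/-- Partial derivative in `x`. -/
def pX (f : F4) (t x y z : ℝ) : ℂ := deriv (fun s => f t s y z) x
/-- Partial derivative in `y`. -/
def pY (f : F4) (t x y z : ℝ) : ℂ := deriv (fun s => f t x s z) y
/-- Partial derivative in `z`. -/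
def pZ (f : F4) (t x y z : ℝ) : ℂ := deriv (fun s => f t x y s) z

/-- The vector field `V₁ = (1/2)(∂/∂t − i ∂/∂x)`. -/
def V₁ (f : F4) (t x y z : ℝ) : ℂ :=
  (1 / 2) * (pT f t x y z - Complex.I * pX f t x y z)

/-- The conjugate vector field `V̄₁ = (1/2)(∂/∂t + i ∂/∂x)`. -/
def V₁c (f : F4) (t x y z : ℝ) : ℂ :=
  (1 / 2) * (pT f t x y z + Complex.I * pX f t x y z)

/-- The vector field `V₂ = (1/2)(∂/∂y + x ∂/∂z − ((a−i)/b) ∂/∂z)`. -/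
def V₂ (a b : ℝ) (f : F4) (t x y z : ℝ) : ℂ :=
  (1 / 2) * (pY f t x y z + (x : ℂ) * pZ f t x y z -
    (((a : ℂ) - Complex.I) / (b : ℂ)) * pZ f t x y z)

/-- The conjugate vector field `V̄₂ = (1/2)(∂/∂y + x ∂/∂z − ((a+i)/b) ∂/∂z)`. -/
def V₂c (a b : ℝ) (f : F4) (t x y z : ℝ) : ℂ :=
  (1 / 2) * (pY f t x y z + (x : ℂ) * pZ f t x y z -
    (((a : ℂ) + Complex.I) / (b : ℂ)) * pZ f t x y z)

/-- The space `𝒮(a,b)` of pairs `(f,g)` of smooth KT-periodic functions satisfying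
`−V̄₂(f) + V̄₁(g) + (b/4)g = 0` and `V₁(f) + V₂(g) = 0`. -/
def Sol (a b : ℝ) : Set (F4 × F4) :=
  {fg | Smooth4 fg.1 ∧ Smooth4 fg.2 ∧ KTPeriodic fg.1 ∧ KTPeriodic fg.2 ∧
    (∀ t x y z : ℝ,
      -V₂c a b fg.1 t x y z + V₁c fg.2 t x y z + ((b : ℂ) / 4) * fg.2 t x y z = 0) ∧
    (∀ t x y z : ℝ, V₁ fg.1 t x y z + V₂ a b fg.2 t x y z = 0)}

/-- `S` is a `ℂ`-subspace of dimension exactly `n`: there are `n` linearly independent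
elements whose span is exactly `S`. -/
def HasDimOver {V : Type*} [AddCommGroup V] [Module ℂ V] (S : Set V) (n : ℕ) : Prop :=
  ∃ v : Fin n → V, LinearIndependent ℂ v ∧
    (Submodule.span ℂ (Set.range v) : Set V) = S

end

open scoped BigOperators

/-! ### Gaussian integers of given norm -/

/-- The Gaussian integers of norm `M`, that is, the representations of `M` as an ordered sum of two
squares of integers. -/
def gaussianNormSet (M : ℕ) : Set GaussianInt := {z | z.norm = M}

theorem mem_gaussianNormSet {M : ℕ} {z : GaussianInt} : z ∈ gaussianNormSet M ↔ z.norm = M :=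
  Iff.rfl

theorem gaussianInt_norm_eq (z : GaussianInt) : z.norm = z.re ^ 2 + z.im ^ 2 := by
  rw [Zsqrtd.norm_def]; ring

theorem finite_gaussianNormSet (M : ℕ) : (gaussianNormSet M).Finite := by
  have hinj : Function.Injective fun z : GaussianInt => (z.re, z.im) := fun z w h =>
    Zsqrtd.ext (congrArg Prod.fst h) (congrArg Prod.snd h)
  refine Set.Finite.of_finite_image (((Set.finite_Icc (-(M : ℤ), -(M : ℤ)) (M, M))).subset ?_)
    hinj.injOn
  rintro _ ⟨z, hz, rfl⟩
  rw [mem_gaussianNormSet, gaussianInt_norm_eq] at hz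
  have hre : |z.re| ≤ M := by
    linarith [Int.natAbs_le_self_sq z.re, sq_nonneg z.im, Int.natCast_natAbs z.re]
  have him : |z.im| ≤ M := by
    linarith [Int.natAbs_le_self_sq z.im, sq_nonneg z.re, Int.natCast_natAbs z.im]
  exact ⟨⟨(abs_le.1 hre).1, (abs_le.1 him).1⟩, (abs_le.1 hre).2, (abs_le.1 him).2⟩

theorem ncard_sep_dvd_gaussianNormSet {w : GaussianInt} {c : ℕ} (hc : c ≠ 0) (hw : w.norm = c)
    (M : ℕ) : {z ∈ gaussianNormSet (c * M) | w ∣ z}.ncard = (gaussianNormSet M).ncard := by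
  have hw0 : w ≠ 0 := by
    rintro rfl
    exact hc (by simpa using hw.symm)
  rw [← Set.ncard_image_of_injective (gaussianNormSet M) (mul_right_injective₀ hw0)]
  congr 1
  ext z
  have key (v : GaussianInt) : w * v ∈ gaussianNormSet (c * M) ↔ v ∈ gaussianNormSet M := by
    simp [mem_gaussianNormSet, Zsqrtd.norm_mul, hw, hc]
  constructor
  · rintro ⟨h, v, rfl⟩
    exact ⟨v, (key v).1 h, rfl⟩
  · rintro ⟨v, h, rfl⟩
    exact ⟨(key v).2 h, dvd_mul_right _ _⟩

theorem ncard_gaussianNormSet_mul_of_forall_dvd {w : GaussianInt} {c M : ℕ} (hc : c ≠ 0)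
    (hw : w.norm = c) (h : ∀ z ∈ gaussianNormSet (c * M), w ∣ z) :
    (gaussianNormSet (c * M)).ncard = (gaussianNormSet M).ncard := by
  rw [← ncard_sep_dvd_gaussianNormSet hc hw M, Set.sep_eq_self_iff_mem_true.2 h]

theorem one_add_I_dvd_of_even_norm {z : GaussianInt} (hz : Even z.norm) :
    (⟨1, 1⟩ : GaussianInt) ∣ z := by
  obtain ⟨k, hk⟩ : Even (z.re + z.im) := by
    rw [gaussianInt_norm_eq] at hz
    simpa [Int.even_add, Int.even_pow] using hz
  refine ⟨⟨k, z.im - k⟩, Zsqrtd.ext ?_ ?_⟩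
  · simp only [Zsqrtd.re_mul]
    linarith
  · simp

theorem ncard_gaussianNormSet_two_pow_mul (k M : ℕ) :
    (gaussianNormSet (2 ^ k * M)).ncard = (gaussianNormSet M).ncard := by
  induction k with
  | zero => simp
  | succ k ih =>
    rw [pow_succ', mul_assoc, ← ih]
    refine ncard_gaussianNormSet_mul_of_forall_dvd two_ne_zero (w := ⟨1, 1⟩) (by decide)
      fun z hz => one_add_I_dvd_of_even_norm ?_
    rw [mem_gaussianNormSet.1 hz]
    simp

theorem ncard_gaussianNormSet_one : (gaussianNormSet 1).ncard = 4 := by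
  have : gaussianNormSet 1 =
      (({⟨1, 0⟩, ⟨-1, 0⟩, ⟨0, 1⟩, ⟨0, -1⟩} : Finset GaussianInt) : Set GaussianInt) := by
    ext z
    simp only [mem_gaussianNormSet, gaussianInt_norm_eq, Finset.coe_insert, Finset.coe_singleton,
      Set.mem_insert_iff, Set.mem_singleton_iff, Zsqrtd.ext_iff, Nat.cast_one]
    constructor
    · intro h
      have hre : z.re ^ 2 ≤ 1 := by nlinarith [sq_nonneg z.im]
      have him : z.im ^ 2 ≤ 1 := by nlinarith [sq_nonneg z.re]
      obtain ⟨_, _⟩ := abs_le.1 ((sq_le_one_iff_abs_le_one _).1 hre)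
      obtain ⟨_, _⟩ := abs_le.1 ((sq_le_one_iff_abs_le_one _).1 him)
      generalize z.re = u at *
      generalize z.im = v at *
      interval_cases u <;> interval_cases v <;> simp_all
    · rintro (h | h | h | h) <;> rw [h.1, h.2] <;> norm_num
  rw [this, Set.ncard_coe_finset]
  decide

theorem dvd_or_star_dvd_of_prime_of_dvd_norm {π z : GaussianInt} (hπ : Prime π)
    (h : π ∣ (z.norm : GaussianInt)) : π ∣ z ∨ star π ∣ z := by
  rw [Zsqrtd.norm_eq_mul_conj] at h
  exact (hπ.dvd_or_dvd h).imp_right (map_dvd_iff_dvd_symm (starRingAut (R := GaussianInt))).2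

theorem not_natCast_dvd_of_mem_gaussianNormSet {P M : ℕ} (hP : P ≠ 0) (hM : ¬P ∣ M)
    {z : GaussianInt} (hz : z ∈ gaussianNormSet (P * M)) : ¬(P : GaussianInt) ∣ z := by
  rintro ⟨w, rfl⟩
  rw [mem_gaussianNormSet, Zsqrtd.norm_mul, Zsqrtd.norm_natCast, Nat.cast_mul, mul_assoc] at hz
  have := mul_left_cancel₀ (Nat.cast_ne_zero.2 hP) hz
  exact hM (Int.natCast_dvd_natCast.1 ⟨_, this.symm⟩)

section Inert

variable {P : ℕ} (hP : P.Prime) (h3 : P % 4 = 3)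
include hP h3

theorem natCast_dvd_of_mod_four_eq_three {z : GaussianInt} (h : (P : ℤ) ∣ z.norm) :
    (P : GaussianInt) ∣ z := by
  have := Fact.mk hP
  have hprime := GaussianInt.prime_of_nat_prime_of_mod_four_eq_three P h3
  simpa using dvd_or_star_dvd_of_prime_of_dvd_norm hprime
    (by simpa using (Int.cast_dvd_cast (α := GaussianInt) _ _ h))

/-- The count is unchanged when `k` is even and vanishes when `k` is odd. -/
theorem ncard_gaussianNormSet_pow_mul_of_mod_four_eq_three {M : ℕ} (hM : ¬P ∣ M) (k : ℕ) :
    (gaussianNormSet (P ^ k * M)).ncard = (gaussianNormSet M).ncard ∨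
      (gaussianNormSet (P ^ k * M)).ncard = 0 := by
  have hdvd {N : ℕ} {z : GaussianInt} (hN : P ∣ N) (hz : z ∈ gaussianNormSet N) :
      (P : GaussianInt) ∣ z :=
    natCast_dvd_of_mod_four_eq_three hP h3
      (by rw [mem_gaussianNormSet.1 hz]; exact Int.natCast_dvd_natCast.2 hN)
  induction k using Nat.twoStepInduction with
  | zero => simp
  | one =>
    right
    rw [pow_one, Set.ncard_eq_zero (finite_gaussianNormSet _), Set.eq_empty_iff_forall_notMem]
    exact fun z hz => not_natCast_dvd_of_mem_gaussianNormSet hP.ne_zero hM hz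
      (hdvd (dvd_mul_right _ _) hz)
  | more k ih _ =>
    rw [show P ^ (k + 2) * M = P * P * (P ^ k * M) by ring]
    rwa [ncard_gaussianNormSet_mul_of_forall_dvd (w := P) (mul_ne_zero hP.ne_zero hP.ne_zero)
      (by simp [Zsqrtd.norm_natCast]) fun z hz => hdvd ⟨P * (P ^ k * M), by ring⟩ hz]

end Inert

theorem gaussianInt_prime_of_prime_norm {w : GaussianInt} {P : ℕ} (hP : P.Prime)
    (hw : w.norm = P) : Prime w := by
  rw [← irreducible_iff_prime, irreducible_iff]
  refine ⟨fun hu => ?_, fun x y hxy => ?_⟩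
  · rw [← Zsqrtd.norm_eq_one_iff, hw] at hu
    exact hP.one_lt.ne' hu
  · rw [← Zsqrtd.norm_eq_one_iff, ← Zsqrtd.norm_eq_one_iff]
    have h : x.norm.natAbs * y.norm.natAbs = P := by
      rw [← Int.natAbs_mul, ← Zsqrtd.norm_mul, ← hxy, hw, Int.natAbs_natCast]
    exact (Nat.prime_mul_iff.1 (h ▸ hP)).symm.imp And.right And.right

theorem not_star_dvd_self_of_prime_norm {w : GaussianInt} {P : ℕ} (hP : P.Prime) (hP2 : P ≠ 2)
    (hw : w.norm = P) : ¬star w ∣ w := by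
  intro h
  have hPZ : Prime (P : ℤ) := Nat.prime_iff_prime_int.1 hP
  have htrace : star w ∣ ((2 * w.re : ℤ) : GaussianInt) := by
    have : ((2 * w.re : ℤ) : GaussianInt) = w + star w := by
      ext <;> simp [two_mul]
    exact this ▸ dvd_add h dvd_rfl
  have hre : (P : ℤ) ∣ w.re := by
    obtain ⟨v, hv⟩ := htrace
    have hnorm := congrArg Zsqrtd.norm hv
    rw [Zsqrtd.norm_mul, Zsqrtd.norm_conj, hw, Zsqrtd.norm_intCast] at hnorm
    have h2 : ¬(P : ℤ) ∣ 2 := fun h =>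
      hP2 ((Nat.prime_dvd_prime_iff_eq hP Nat.prime_two).1 (by exact_mod_cast h))
    exact (hPZ.dvd_or_dvd (or_self_iff.1 (hPZ.dvd_or_dvd ⟨_, hnorm⟩))).resolve_left h2
  rw [gaussianInt_norm_eq] at hw
  have him : (P : ℤ) ∣ w.im :=
    hPZ.dvd_of_dvd_pow ((dvd_add_right (dvd_pow hre two_ne_zero)).1 hw.symm.dvd)
  have hsq := dvd_add (pow_dvd_pow_of_dvd hre 2) (pow_dvd_pow_of_dvd him 2)
  rw [hw] at hsq
  exact hPZ.not_dvd_one (Int.dvd_of_mul_dvd_mul_left hPZ.ne_zero (by rwa [← sq, mul_one]))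

section Split

variable {P : ℕ} (hP : P.Prime)
include hP

/-- Inclusion–exclusion over the two Gaussian primes `w` and `star w` above `P`: an element whose
norm is divisible by `P` is divisible by one of them, and by both exactly if it is divisible by
`P`. -/
theorem ncard_gaussianNormSet_mul_add {w : GaussianInt} (hw : w.norm = P) (hP2 : P ≠ 2) (M : ℕ) :
    (gaussianNormSet (P * M)).ncard +
      {z ∈ gaussianNormSet (P * M) | (P : GaussianInt) ∣ z}.ncard =
      2 * (gaussianNormSet M).ncard := by
  have hw' : (star w).norm = P := by rw [Zsqrtd.norm_conj, hw]
  have hmul : w * star w = P := by rw [← Zsqrtd.norm_eq_mul_conj, hw, Int.cast_natCast]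
  have hunion : {z ∈ gaussianNormSet (P * M) | w ∣ z} ∪ {z ∈ gaussianNormSet (P * M) | star w ∣ z} =
      gaussianNormSet (P * M) := by
    rw [← Set.sep_or, Set.sep_eq_self_iff_mem_true]
    intro z hz
    refine dvd_or_star_dvd_of_prime_of_dvd_norm (gaussianInt_prime_of_prime_norm hP hw) ?_
    rw [mem_gaussianNormSet.1 hz, Nat.cast_mul, Int.cast_mul, Int.cast_natCast, ← hmul, mul_assoc]
    exact dvd_mul_right _ _
  have hinter : {z ∈ gaussianNormSet (P * M) | w ∣ z} ∩ {z ∈ gaussianNormSet (P * M) | star w ∣ z} =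
      {z ∈ gaussianNormSet (P * M) | (P : GaussianInt) ∣ z} := by
    rw [← Set.sep_and]
    congr 1 with z
    refine and_congr_right fun _ => ⟨?_, fun h => ?_⟩
    · rintro ⟨⟨v, rfl⟩, h⟩
      rw [← hmul]
      exact mul_dvd_mul_left _ (((gaussianInt_prime_of_prime_norm hP hw').dvd_or_dvd h).resolve_left
        (not_star_dvd_self_of_prime_norm hP hP2 hw))
    · rw [← hmul] at h
      exact ⟨(dvd_mul_right _ _).trans h, (dvd_mul_left _ _).trans h⟩
  have hcount := Set.ncard_union_add_ncard_inter {z ∈ gaussianNormSet (P * M) | w ∣ z}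
    {z ∈ gaussianNormSet (P * M) | star w ∣ z} ((finite_gaussianNormSet _).sep _)
    ((finite_gaussianNormSet _).sep _)
  rw [hunion, hinter, ncard_sep_dvd_gaussianNormSet hP.ne_zero hw,
    ncard_sep_dvd_gaussianNormSet hP.ne_zero hw'] at hcount
  rw [hcount, two_mul]

theorem ncard_gaussianNormSet_pow_mul_of_mod_four_eq_one (h1 : P % 4 = 1) {M : ℕ} (hM : ¬P ∣ M)
    (k : ℕ) : (gaussianNormSet (P ^ k * M)).ncard = (k + 1) * (gaussianNormSet M).ncard := by
  have := Fact.mk hP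
  obtain ⟨a, b, hab⟩ := Nat.Prime.sq_add_sq (p := P) (by omega)
  have hw : (⟨a, b⟩ : GaussianInt).norm = P := by
    simpa [gaussianInt_norm_eq] using (by exact_mod_cast hab : (a : ℤ) ^ 2 + (b : ℤ) ^ 2 = P)
  have hrec := ncard_gaussianNormSet_mul_add hP hw (by omega)
  induction k using Nat.twoStepInduction with
  | zero => simp
  | one =>
    have h0 : {z ∈ gaussianNormSet (P * M) | (P : GaussianInt) ∣ z} = ∅ :=
      Set.sep_eq_empty_iff_mem_false.2 fun _ hz =>
        not_natCast_dvd_of_mem_gaussianNormSet hP.ne_zero hM hz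
    simpa [h0] using hrec M
  | more k ih ih' =>
    have h := hrec (P ^ (k + 1) * M)
    have hsplit : P * (P ^ (k + 1) * M) = P * P * (P ^ k * M) := by ring
    rw [hsplit, ncard_sep_dvd_gaussianNormSet (mul_ne_zero hP.ne_zero hP.ne_zero)
      (by simp [Zsqrtd.norm_natCast]), ← hsplit, ih, ih', ← mul_assoc P, ← pow_succ'] at h
    linarith

end Split

theorem not_dvd_prod_pow_of_forall_ne {ι : Type*} {s : Finset ι} {P : ℕ} (hP : P.Prime)
    {r : ι → ℕ} (hr : ∀ i ∈ s, (r i).Prime) (hne : ∀ i ∈ s, r i ≠ P) (e : ι → ℕ) :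
    ¬P ∣ ∏ i ∈ s, r i ^ e i := by
  intro h
  obtain ⟨i, hi, hd⟩ := (hP.prime.dvd_finsetProd_iff _).1 h
  exact hne i hi ((Nat.prime_dvd_prime_iff_eq hP (hr i hi)).1 (hP.dvd_of_dvd_pow hd)).symm

section Prod

variable {ι κ : Type*} {r : ι → ℕ} (hr : ∀ i, (r i).Prime) (hr1 : ∀ i, r i % 4 = 1)
include hr hr1

theorem ncard_gaussianNormSet_prod_of_mod_four_eq_one (hinj : Function.Injective r) (e : ι → ℕ)
    (S : Finset ι) :
    (gaussianNormSet (∏ i ∈ S, r i ^ e i)).ncard = 4 * ∏ i ∈ S, (e i + 1) := by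
  classical
  induction S using Finset.induction_on with
  | empty => simpa using ncard_gaussianNormSet_one
  | insert j S hj ih =>
    have hndvd : ¬r j ∣ ∏ i ∈ S, r i ^ e i :=
      not_dvd_prod_pow_of_forall_ne (hr j) (fun i _ => hr i)
        (fun i hi h => hj (hinj h ▸ hi)) e
    rw [Finset.prod_insert hj, Finset.prod_insert hj,
      ncard_gaussianNormSet_pow_mul_of_mod_four_eq_one (hr j) (hr1 j) hndvd, ih]
    ring

theorem ncard_gaussianNormSet_prod_mul_prod (e : ι → ℕ) (S : Finset ι) {u : κ → ℕ}
    (hu : ∀ i, (u i).Prime) (hu3 : ∀ i, u i % 4 = 3) (hinj : Function.Injective u) (d : κ → ℕ)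
    (T : Finset κ) :
    (gaussianNormSet ((∏ i ∈ T, u i ^ d i) * ∏ i ∈ S, r i ^ e i)).ncard =
        (gaussianNormSet (∏ i ∈ S, r i ^ e i)).ncard ∨
      (gaussianNormSet ((∏ i ∈ T, u i ^ d i) * ∏ i ∈ S, r i ^ e i)).ncard = 0 := by
  classical
  induction T using Finset.induction_on with
  | empty => simp
  | insert j T hj ih =>
    have hndvd : ¬u j ∣ (∏ i ∈ T, u i ^ d i) * ∏ i ∈ S, r i ^ e i := by
      refine (hu j).prime.not_dvd_mul ?_ ?_
      · exact not_dvd_prod_pow_of_forall_ne (hu j) (fun i _ => hu i)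
          (fun i hi h => hj (hinj h ▸ hi)) d
      · refine not_dvd_prod_pow_of_forall_ne (hu j) (fun i _ => hr i) (fun i _ h => ?_) e
        have := hr1 i
        have := hu3 j
        omega
    rw [Finset.prod_insert hj, mul_assoc]
    rcases ncard_gaussianNormSet_pow_mul_of_mod_four_eq_three (hu j) (hu3 j) hndvd (d j) with h | h
    · rwa [h]
    · exact Or.inr h

end Prod

/-- Jacobi's two-square count. The primes `≡ 3 (mod 4)` cannot make it vanish here, since `p`
itself has norm `p ^ 2`. -/
theorem ncard_norm_eq_sq {ι κ : Type*} [Fintype ι] [Fintype κ] {u d : κ → ℕ} {r e : ι → ℕ} {p : ℤ}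
    {k : ℕ} (hu : ∀ i, (u i).Prime) (hu3 : ∀ i, u i % 4 = 3) (huinj : Function.Injective u)
    (hr : ∀ i, (r i).Prime) (hr1 : ∀ i, r i % 4 = 1) (hrinj : Function.Injective r)
    (hfact : p ^ 2 = 2 ^ k * (∏ i, (u i : ℤ) ^ d i) * ∏ i, (r i : ℤ) ^ e i) :
    {z : GaussianInt | z.norm = p ^ 2}.ncard = 4 * ∏ i, (e i + 1) := by
  have hset : {z : GaussianInt | z.norm = p ^ 2} =
      gaussianNormSet (2 ^ k * ((∏ i, u i ^ d i) * ∏ i, r i ^ e i)) := by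
    ext z
    rw [mem_gaussianNormSet, Set.mem_ofPred_eq, hfact]
    push_cast
    rw [mul_assoc]
  have hne : (gaussianNormSet (2 ^ k * ((∏ i, u i ^ d i) * ∏ i, r i ^ e i))).ncard ≠ 0 := by
    rw [Ne, Set.ncard_eq_zero (finite_gaussianNormSet _), ← hset]
    exact Set.Nonempty.ne_empty ⟨p, by rw [Set.mem_ofPred_eq, Zsqrtd.norm_intCast, sq]⟩
  rw [ncard_gaussianNormSet_two_pow_mul] at hne
  rw [hset, ncard_gaussianNormSet_two_pow_mul,
    (ncard_gaussianNormSet_prod_mul_prod hr hr1 e _ hu hu3 huinj d _).resolve_right hne,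
    ncard_gaussianNormSet_prod_of_mod_four_eq_one hr hr1 hrinj]

/-! ### Transcendence of `π` -/

section TranscendentalPi

open Polynomial

theorem exists_int_poly_eval_zero_ne_zero_and_forall_mem_aroots {K : Type*} [Field K] [CharZero K]
    {ι : Type*} (S : Finset ι) {x : ι → K} (halg : ∀ i ∈ S, IsAlgebraic ℤ (x i))
    (h0 : ∀ i ∈ S, x i ≠ 0) :
    ∃ f : ℤ[X], f.eval 0 ≠ 0 ∧ ∀ i ∈ S, x i ∈ f.aroots K := by
  have hex : ∀ i, ∃ g : ℤ[X], i ∈ S → g.eval 0 ≠ 0 ∧ aeval (x i) g = 0 := fun i => by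
    by_cases hi : i ∈ S
    · obtain ⟨g, hg0, hg⟩ := (halg i hi).exists_nonzero_coeff_and_aeval_eq_zero
        (mem_nonZeroDivisors_of_ne_zero (h0 i hi))
      exact ⟨g, fun _ => ⟨coeff_zero_eq_eval_zero g ▸ hg0, hg⟩⟩
    · exact ⟨0, fun h => absurd h hi⟩
  choose g hg using hex
  have heval : (∏ i ∈ S, g i).eval 0 ≠ 0 := by
    rw [eval_prod]
    exact Finset.prod_ne_zero_iff.2 fun i hi => (hg i hi).1
  refine ⟨∏ i ∈ S, g i, heval, fun i hi => mem_aroots.2 ⟨?_, ?_⟩⟩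
  · rintro h
    simp [h] at heval
  · rw [map_prod]
    exact Finset.prod_eq_zero hi (hg i hi).2

theorem exists_int_pow_mul_sum_aeval_eq {A ι : Type*} [CommRing A] {S : Finset ι} {x : ι → A}
    {D : ℤ} (hint : ∀ m : ℕ, ∃ K : ℤ, ∑ i ∈ S, (D * x i) ^ m = K) {g : ℤ[X]} {M : ℕ}
    (hM : g.natDegree ≤ M) : ∃ K : ℤ, (D : A) ^ M * ∑ i ∈ S, aeval (x i) g = K := by
  choose K hK using hint
  refine ⟨∑ m ∈ Finset.range (M + 1), g.coeff m * D ^ (M - m) * K m, ?_⟩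
  have hexpand (y : A) : (D : A) ^ M * aeval y g =
      ∑ m ∈ Finset.range (M + 1), (g.coeff m * D ^ (M - m) : A) * (D * y) ^ m := by
    rw [aeval_eq_sum_range' (Nat.lt_succ_of_le hM), Finset.mul_sum]
    refine Finset.sum_congr rfl fun m hm => ?_
    rw [zsmul_eq_mul, mul_pow, ← Nat.sub_add_cancel (Nat.lt_succ_iff.1 (Finset.mem_range.1 hm)),
      pow_add, Nat.add_sub_cancel]
    ring
  push_cast
  simp_rw [← hK, Finset.mul_sum, hexpand]
  exact Finset.sum_comm

/-- Hermite's argument: were the sum zero, the simultaneous approximations of the exponentials would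
produce, for large primes `P`, an integer that is `≢ 0 (mod P)` but smaller than `1`. -/
theorem intCast_add_sum_exp_ne_zero {ι : Type*} {S : Finset ι} {x : ι → ℂ}
    (halg : ∀ i ∈ S, IsAlgebraic ℤ (x i)) (h0 : ∀ i ∈ S, x i ≠ 0) {k D : ℤ} (hk : k ≠ 0)
    (hD : D ≠ 0) (hint : ∀ m : ℕ, ∃ K : ℤ, ∑ i ∈ S, (D * x i) ^ m = K) :
    (k : ℂ) + ∑ i ∈ S, exp (x i) ≠ 0 := by
  intro hzero
  obtain ⟨f, hf0, hroot⟩ := exists_int_poly_eval_zero_ne_zero_and_forall_mem_aroots S halg h0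
  obtain ⟨c, hc⟩ := LindemannWeierstrass.exp_polynomial_approx f hf0
  set d := f.natDegree
  have hlim := FloorSemiring.tendsto_mul_pow_div_factorial_sub_atTop (S.card : ℝ) (|D| ^ d * c) 1
  obtain ⟨N, hN⟩ := Filter.eventually_atTop.1 (hlim.eventually (gt_mem_nhds one_pos))
  obtain ⟨P, hPge, hP⟩ := Nat.exists_infinite_primes
    (N + ((f.eval 0).natAbs + 1) + (k.natAbs + 1) + (D.natAbs + 1))
  obtain ⟨n, hn, g, hg, happ⟩ := hc P (by omega) hP
  obtain ⟨K, hK⟩ := exists_int_pow_mul_sum_aeval_eq hint (hg.trans (Nat.sub_le _ 1))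
  have hne : D ^ (P * d) * (n * k) + P * K ≠ 0 := by
    have hPZ : Prime (P : ℤ) := Nat.prime_iff_prime_int.1 hP
    have hnot {u : ℤ} (hu : u ≠ 0) (hlt : u.natAbs < P) : ¬(P : ℤ) ∣ u := fun h =>
      hu (Int.eq_zero_of_dvd_of_natAbs_lt_natAbs h (by simpa using hlt))
    intro h
    have hdvd : (P : ℤ) ∣ D ^ (P * d) * (n * k) :=
      (dvd_add_left (dvd_mul_right _ K)).1 (h ▸ dvd_zero _)
    exact hPZ.not_dvd_mul (fun h => hnot hD (by omega) (hPZ.dvd_of_dvd_pow h))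
      (hPZ.not_dvd_mul hn (hnot hk (by omega))) hdvd
  have herror : ((D ^ (P * d) * (n * k) + P * K : ℤ) : ℂ) =
      -(D ^ (P * d) * ∑ i ∈ S, (n • exp (x i) - P • aeval (x i) g)) := by
    push_cast
    rw [← hK, Finset.sum_sub_distrib, ← Finset.smul_sum, ← Finset.smul_sum, zsmul_eq_mul,
      nsmul_eq_mul, eq_neg_of_add_eq_zero_right hzero]
    ring
  have hlt : ‖((D ^ (P * d) * (n * k) + P * K : ℤ) : ℂ)‖ < 1 := calc
    _ = |(D : ℝ)| ^ (P * d) * ‖∑ i ∈ S, (n • exp (x i) - P • aeval (x i) g)‖ := by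
      rw [herror, norm_neg, norm_mul, norm_pow, Complex.norm_intCast]
    _ ≤ |(D : ℝ)| ^ (P * d) * (S.card * (c ^ P / (P - 1).factorial)) := by
      gcongr
      rw [← nsmul_eq_mul]
      exact (norm_sum_le _ _).trans (Finset.sum_le_card_nsmul _ _ _ fun i hi => happ (hroot i hi))
    _ = S.card * (|D| ^ d * c) ^ P / (P - 1).factorial := by
      rw [mul_comm P, pow_mul, mul_pow, Int.cast_abs]
      ring
    _ < 1 := hN P (by omega)
  rw [Complex.norm_intCast] at hlt
  exact hne (Int.abs_lt_one_iff.1 (by exact_mod_cast hlt))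

variable {L : Type*} [Field L] [Algebra ℚ L] [FiniteDimensional ℚ L] [IsGalois ℚ L]

theorem exists_int_eq_of_isIntegral_of_forall_gal_apply_eq {y : L} (hy : IsIntegral ℤ y)
    (hfix : ∀ σ : Gal(L/ℚ), σ y = y) : ∃ K : ℤ, y = K := by
  obtain ⟨r, rfl⟩ := (IsGalois.mem_range_algebraMap_iff_fixed y).2 hfix
  obtain ⟨K, rfl⟩ := IsIntegrallyClosed.isIntegral_iff.1
    ((isIntegral_algebraMap_iff (algebraMap ℚ L).injective).1 hy)
  exact ⟨K, by simp⟩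

theorem exists_int_eq_sum_pow_sum [DecidableEq L] {S : Finset (Finset L)}
    (hS : ∀ σ : Gal(L/ℚ), ∀ T ∈ S, T.image σ ∈ S) {D : ℤ}
    (hD : ∀ T ∈ S, ∀ r ∈ T, IsIntegral ℤ (D • r)) (m : ℕ) :
    ∃ K : ℤ, ∑ T ∈ S, (D * ∑ r ∈ T, r) ^ m = (K : L) := by
  refine exists_int_eq_of_isIntegral_of_forall_gal_apply_eq
    (IsIntegral.sum _ fun T hT => IsIntegral.pow ?_ m) fun σ => ?_
  · rw [Finset.mul_sum]
    exact IsIntegral.sum _ fun r hr => zsmul_eq_mul r D ▸ hD T hT r hr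
  · have hinj : Set.InjOn (Finset.image σ) (S : Set (Finset L)) :=
      (Finset.image_injective σ.injective).injOn
    rw [map_sum]
    exact Finset.sum_nbij (Finset.image σ) (hS σ) hinj
      (Finset.surjOn_of_injOn_of_card_le _ (hS σ) hinj le_rfl)
      fun T _ => by simp [Finset.sum_image σ.injective.injOn]

theorem prod_one_add_exp_eq {R : Type*} [CommRing R] [DecidableEq R] (φ : R →+* ℂ)
    (U : Finset R) : ∏ r ∈ U, (1 + exp (φ r)) =
      ((U.powerset.filter fun T => ∑ r ∈ T, r = 0).card : ℤ) +
        ∑ T ∈ U.powerset with ∑ r ∈ T, r ≠ 0, exp (φ (∑ r ∈ T, r)) := by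
  simp_rw [Finset.prod_one_add, ← Complex.exp_sum, ← map_sum φ]
  rw [← Finset.sum_filter_add_sum_filter_not _ fun T => ∑ r ∈ T, r = 0]
  congr 1
  rw [Finset.sum_congr rfl fun T hT => by rw [(Finset.mem_filter.1 hT).2, map_zero, exp_zero]]
  simp

/-- Expanding the product gives a sum of exponentials over the subsets of `U`; the empty subset
contributes a positive integer, and the power sums of the exponents are rational by symmetry. -/
theorem prod_one_add_exp_ne_zero (φ : L →+* ℂ) {U : Finset L}
    (hU : ∀ σ : Gal(L/ℚ), ∀ r ∈ U, σ r ∈ U) : ∏ r ∈ U, (1 + exp (φ r)) ≠ 0 := by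
  classical
  obtain ⟨D, hD, hDint⟩ := exists_integral_multiples ℤ ℚ U
  have hmem {T : Finset L} (hT : T ∈ U.powerset.filter fun T => ∑ r ∈ T, r ≠ 0) :
      T ⊆ U ∧ ∑ r ∈ T, r ≠ 0 := by
    simpa using hT
  have hgal : ∀ σ : Gal(L/ℚ), ∀ T ∈ U.powerset.filter fun T => ∑ r ∈ T, r ≠ 0,
      T.image σ ∈ U.powerset.filter fun T => ∑ r ∈ T, r ≠ 0 := by
    intro σ T hT
    obtain ⟨hTU, hT0⟩ := hmem hT
    rw [Finset.mem_filter, Finset.mem_powerset, Finset.sum_image σ.injective.injOn, ← map_sum]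
    exact ⟨Finset.image_subset_iff.2 fun r hr => hU σ r (hTU hr),
      (map_ne_zero_iff σ σ.injective).2 hT0⟩
  rw [prod_one_add_exp_eq]
  refine intCast_add_sum_exp_ne_zero (fun T _ => ?_)
    (fun T hT => (map_ne_zero_iff φ φ.injective).2 (hmem hT).2)
    (Nat.cast_ne_zero.2 (Finset.card_ne_zero_of_mem (a := ∅) (by simp))) hD fun m => ?_
  · have : Algebra.IsAlgebraic ℤ ℚ := IsLocalization.isAlgebraic ℚ (nonZeroDivisors ℤ)
    have := Algebra.IsAlgebraic.trans ℤ ℚ L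
    exact (Algebra.IsAlgebraic.isAlgebraic _).algHom φ.toIntAlgHom
  · obtain ⟨K, hK⟩ :=
      exists_int_eq_sum_pow_sum hgal (fun T hT r hr => hDint r ((hmem hT).1 hr)) m
    exact ⟨K, by simpa using congrArg φ hK⟩

/-- A Galois-stable set of numbers containing `iπ` has `∏ (1 + exp) = 0`, as `exp (iπ) = -1`. -/
theorem transcendental_pi : Transcendental ℚ Real.pi := by
  classical
  intro hpi
  have hint : IsIntegral ℚ (Real.pi * I) :=
    (hpi.algebraMap (A := ℂ)).isIntegral.mul (isIntegral_int_I.tower_top)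
  obtain ⟨p, hp, hpα⟩ : ∃ p : ℚ[X], Irreducible p ∧ aeval (Real.pi * I) p = 0 :=
    ⟨_, minpoly.irreducible hint, minpoly.aeval _ _⟩
  obtain ⟨L, _, _, hL⟩ : ∃ (L : Type) (_ : Field L) (_ : Algebra ℚ L), IsSplittingField ℚ L p :=
    ⟨p.SplittingField, _, _, IsSplittingField.splittingField p⟩
  have := IsSplittingField.finiteDimensional L p
  have : IsGalois ℚ L := IsGalois.of_separable_splitting_field hp.separable
  set φ : L →ₐ[ℚ] ℂ := IsSplittingField.lift L p (IsAlgClosed.splits _)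
  obtain ⟨r, hr, hφr⟩ : Real.pi * I ∈ φ '' p.rootSet L := by
    rw [hL.splits.image_rootSet]
    exact mem_rootSet.2 ⟨hp.ne_zero, hpα⟩
  refine prod_one_add_exp_ne_zero φ.toRingHom (U := (p.aroots L).toFinset)
    (fun σ x hx => ?_) (Finset.prod_eq_zero (Finset.mem_coe.1 hr) ?_)
  · rw [Multiset.mem_toFinset, mem_aroots] at hx ⊢
    exact ⟨hx.1, by rw [aeval_algHom_apply σ, hx.2, map_zero]⟩
  · change 1 + exp (φ r) = 0
    rw [hφr, exp_pi_mul_I, add_neg_cancel]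

end TranscendentalPi

/-! ### Resonant frequencies -/

/-- The resonant frequencies: the pairs `(l, m)` of frequencies in `(x, y)` at which the
constant-coefficient system satisfied by the Fourier coefficients independent of `t` and `z` is
singular. -/
def resonantFreq (b : ℝ) : Set (ℤ × ℤ) :=
  {c | 4 * Real.pi * ((c.1 : ℝ) ^ 2 + (c.2 : ℝ) ^ 2) = b * c.1}

theorem mem_resonantFreq {b : ℝ} {c : ℤ × ℤ} :
    c ∈ resonantFreq b ↔ 4 * Real.pi * ((c.1 : ℝ) ^ 2 + (c.2 : ℝ) ^ 2) = b * c.1 :=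
  Iff.rfl

theorem mem_resonantFreq_eight_pi_mul_div {p q : ℤ} (hq : q ≠ 0) {c : ℤ × ℤ} :
    c ∈ resonantFreq (8 * Real.pi * p / q) ↔ q * (c.1 ^ 2 + c.2 ^ 2) = 2 * p * c.1 := by
  have hqR : (q : ℝ) ≠ 0 := Int.cast_ne_zero.2 hq
  have h4π : 4 * Real.pi ≠ 0 := mul_ne_zero four_ne_zero Real.pi_ne_zero
  rw [mem_resonantFreq, div_mul_eq_mul_div, eq_div_iff hqR, ← Int.cast_inj (α := ℝ)]
  push_cast
  constructor <;> intro h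
  · exact mul_left_cancel₀ h4π (by linear_combination h)
  · linear_combination 4 * Real.pi * h

theorem finite_resonantFreq (b : ℝ) : (resonantFreq b).Finite := by
  set κ : ℝ := b / (4 * Real.pi) with hκ
  refine (Set.finite_Icc ((-⌈|κ|⌉, -⌈|κ|⌉) : ℤ × ℤ) (⌈|κ|⌉, ⌈|κ|⌉)).subset fun c hc => ?_
  have hc' : (c.1 : ℝ) ^ 2 + (c.2 : ℝ) ^ 2 = κ * c.1 := by
    rw [hκ, div_mul_eq_mul_div, eq_div_iff (by positivity), ← mem_resonantFreq.1 hc]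
    ring
  have hbound (j : ℤ) (hj : (j : ℝ) ^ 2 ≤ κ ^ 2) : -⌈|κ|⌉ ≤ j ∧ j ≤ ⌈|κ|⌉ :=
    abs_le.1 (by exact_mod_cast (sq_le_sq.1 hj).trans (Int.le_ceil _))
  have h1 := hbound c.1 (by nlinarith [sq_nonneg (κ - c.1), sq_nonneg (c.2 : ℝ)])
  have h2 := hbound c.2 (by nlinarith [sq_nonneg (κ - c.1), sq_nonneg (κ - 2 * c.1)])
  exact ⟨⟨h1.1, h2.1⟩, h1.2, h2.2⟩

/-- The Gaussian integers of norm `p ^ 2` that are congruent to `-p` modulo `q`. -/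
def gaussianCongrSet (p q : ℤ) : Set GaussianInt :=
  {z | z.norm = p ^ 2 ∧ (q : GaussianInt) ∣ z + p}

/-- Multiply `q (l² + m²) = 2 p l` by `q` and complete the square: `(q l - p)² + (q m)² = p²`. -/
theorem ncard_resonantFreq_eq {p q : ℤ} (hq : q ≠ 0) :
    (resonantFreq (8 * Real.pi * p / q)).ncard = (gaussianCongrSet p q).ncard := by
  set φ : ℤ × ℤ → GaussianInt := fun c => ⟨q * c.1 - p, q * c.2⟩ with hφ
  have hinj : Function.Injective φ := by
    rintro ⟨l, m⟩ ⟨l', m'⟩ h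
    simpa [hφ, Zsqrtd.ext_iff, hq] using h
  rw [← Set.ncard_image_of_injective _ hinj]
  congr 1
  have hnorm (c : ℤ × ℤ) :
      (φ c).norm = p ^ 2 ↔ c ∈ resonantFreq (8 * Real.pi * p / q) := by
    rw [mem_resonantFreq_eight_pi_mul_div hq, gaussianInt_norm_eq]
    constructor <;> intro h
    · exact mul_left_cancel₀ hq (by linear_combination h)
    · linear_combination q * h
  ext z
  constructor
  · rintro ⟨c, hc, rfl⟩
    exact ⟨(hnorm c).2 hc, Zsqrtd.intCast_dvd q _ |>.2 ⟨⟨c.1, by simp [hφ]⟩, ⟨c.2, by simp [hφ]⟩⟩⟩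
  · rintro ⟨hz, hdvd⟩
    obtain ⟨⟨l, hl⟩, ⟨m, hm⟩⟩ := (Zsqrtd.intCast_dvd q _).1 hdvd
    have hφz : φ (l, m) = z := by
      ext
      · simpa [hφ, sub_eq_iff_eq_add] using hl.symm
      · simpa [hφ] using hm.symm
    exact ⟨(l, m), (hnorm _).1 (hφz ▸ hz), hφz⟩

/-- The Gaussian integer `i ^ e`. -/
def gaussianIPow (e : ℕ) : GaussianInt := ⟨0, 1⟩ ^ e

theorem norm_gaussianIPow (e : ℕ) : (gaussianIPow e).norm = 1 :=
  (map_pow Zsqrtd.normMonoidHom ⟨0, 1⟩ e).trans (one_pow e)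

theorem star_gaussianIPow_mul_self (e : ℕ) : star (gaussianIPow e) * gaussianIPow e = 1 := by
  rw [mul_comm, ← Zsqrtd.norm_eq_mul_conj, norm_gaussianIPow, Int.cast_one]

/-- Each element of norm `p ^ 2` is in exactly one way `i ^ e`, with `e < d`, times an element
congruent to `-p`. -/
theorem mul_ncard_gaussianCongrSet {p q : ℤ} {d : ℕ} (hcop : IsCoprime p q)
    (hdist : ∀ e < d, ∀ f < d, (q : GaussianInt) ∣ gaussianIPow e - gaussianIPow f → e = f)
    (hex : ∀ z : GaussianInt, z.norm = p ^ 2 →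
      ∃ e < d, (q : GaussianInt) ∣ z + gaussianIPow e * p) :
    d * (gaussianCongrSet p q).ncard = {z : GaussianInt | z.norm = p ^ 2}.ncard := by
  have himg : (fun x : ℕ × GaussianInt => gaussianIPow x.1 * x.2) ''
      (Set.Iio d ×ˢ gaussianCongrSet p q) = {z | z.norm = p ^ 2} := by
    ext z
    constructor
    · rintro ⟨⟨e, w⟩, ⟨-, hw, -⟩, rfl⟩
      simpa [Zsqrtd.norm_mul, norm_gaussianIPow] using hw
    · intro hz
      obtain ⟨e, he, hdvd⟩ := hex z hz
      refine ⟨(e, star (gaussianIPow e) * z), ⟨he, ?_, ?_⟩, ?_⟩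
      · simpa [Zsqrtd.norm_mul, Zsqrtd.norm_conj, norm_gaussianIPow] using hz
      · have := hdvd.mul_left (star (gaussianIPow e))
        rwa [mul_add, ← mul_assoc _ _ (p : GaussianInt), star_gaussianIPow_mul_self,
          one_mul] at this
      · change gaussianIPow e * (star (gaussianIPow e) * z) = z
        rw [← mul_assoc, mul_comm (gaussianIPow e), star_gaussianIPow_mul_self, one_mul]
  have hinj : Set.InjOn (fun x : ℕ × GaussianInt => gaussianIPow x.1 * x.2)
      (Set.Iio d ×ˢ gaussianCongrSet p q) := by
    rintro ⟨e, w⟩ ⟨he, -, hw⟩ ⟨f, v⟩ ⟨hf, -, hv⟩ (h : gaussianIPow e * w = gaussianIPow f * v)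
    have hdvd : (q : GaussianInt) ∣ p * (gaussianIPow e - gaussianIPow f) := by
      have := dvd_sub (hw.mul_left (gaussianIPow e)) (hv.mul_left (gaussianIPow f))
      rw [mul_add, mul_add, h] at this
      convert this using 1
      ring
    have hcop' : IsCoprime (q : GaussianInt) p := (hcop.map (Int.castRingHom GaussianInt)).symm
    obtain rfl := hdist e he f hf (hcop'.dvd_of_dvd_mul_left hdvd)
    have hI : gaussianIPow e ≠ 0 := pow_ne_zero _ (by decide)
    rw [mul_left_cancel₀ hI h]
  rw [← himg, hinj.ncard_image, Set.ncard_prod]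
  simp

/-- It suffices to look at `z` and `p` modulo a multiple `k * q` of `q`; `k = 2` is needed for
`q = 4`. -/
theorem exists_dvd_add_gaussianIPow_mul_of_zmod {p q k : ℤ} (N d : ℕ) (hN : (N : ℤ) = k * q)
    (hk : k ≠ 0) (hqp : ¬q ∣ p)
    (h : ∀ x y r : ZMod N, k * r ≠ 0 → x ^ 2 + y ^ 2 = r ^ 2 →
      ∃ e < d, k * (x + (gaussianIPow e).re * r) = 0 ∧ k * (y + (gaussianIPow e).im * r) = 0)
    {z : GaussianInt} (hz : z.norm = p ^ 2) :
    ∃ e < d, (q : GaussianInt) ∣ z + gaussianIPow e * p := by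
  have hiff (j : ℤ) : (k : ZMod N) * j = 0 ↔ q ∣ j := by
    rw [← Int.cast_mul, ZMod.intCast_zmod_eq_zero_iff_dvd, hN, mul_dvd_mul_iff_left hk]
  rw [gaussianInt_norm_eq] at hz
  obtain ⟨e, he, hre, him⟩ := h z.re z.im p (by rwa [Ne, hiff])
    (by exact_mod_cast congrArg (Int.cast : ℤ → ZMod N) hz)
  refine ⟨e, he, (Zsqrtd.intCast_dvd q _).2 ⟨(hiff _).1 ?_, (hiff _).1 ?_⟩⟩
  · simpa using hre
  · simpa using him

theorem mul_ncard_resonantFreq {p q : ℤ} (hcop : IsCoprime p q) (hq1 : 1 ≤ q) (hq5 : q ≤ 5) :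
    (if q = 1 then 1 else if q = 2 then 2 else 4) *
      (resonantFreq (8 * Real.pi * p / q)).ncard = {z : GaussianInt | z.norm = p ^ 2}.ncard := by
  have hqp (hq : 1 < q) : ¬q ∣ p := fun h => by
    have := Int.isUnit_iff.1 (hcop.isUnit_of_dvd' h dvd_rfl)
    omega
  rw [ncard_resonantFreq_eq (by omega)]
  refine mul_ncard_gaussianCongrSet hcop ?_ ?_
  · simp only [Zsqrtd.intCast_dvd]
    interval_cases q <;> decide
  · intro z hz
    interval_cases q
    · exact ⟨0, by simp, by simp⟩
    · exact exists_dvd_add_gaussianIPow_mul_of_zmod (k := 1) 2 2 rfl (by simp) (hqp (by simp))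
        (by decide) hz
    · exact exists_dvd_add_gaussianIPow_mul_of_zmod (k := 1) 3 4 rfl (by simp) (hqp (by simp))
        (by decide) hz
    · exact exists_dvd_add_gaussianIPow_mul_of_zmod (k := 2) 8 4 rfl (by simp) (hqp (by simp))
        (by decide) hz
    · exact exists_dvd_add_gaussianIPow_mul_of_zmod (k := 1) 5 4 rfl (by simp) (hqp (by simp))
        (by decide) hz

theorem ncard_resonantFreq {p q : ℤ} (hcop : IsCoprime p q) (hq1 : 1 ≤ q) (hq5 : q ≤ 5) {R : ℕ}
    (hR : {z : GaussianInt | z.norm = p ^ 2}.ncard = 4 * R) :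
    (resonantFreq (8 * Real.pi * p / q)).ncard =
      (if q = 1 then 4 else if q = 2 then 2 else 1) * R := by
  have := mul_ncard_resonantFreq hcop hq1 hq5
  split_ifs at this ⊢ <;> omega

/-- The condition on `b` under which the Fourier coefficients of frequency `n ≠ 0` in `z` of a
solution vanish. -/
def NonResonant (b : ℝ) : Prop :=
  ∀ n : ℤ, n ≠ 0 → ∀ j : ℤ,
    b ^ 2 / 16 - (2 * Real.pi * n) ^ 2 / b ^ 2 ≠ 2 * (2 * Real.pi * n) * j

/-- A resonance is a quadratic equation for `π` with rational coefficients. -/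
theorem nonResonant_mul_pi {r : ℚ} (hr : r ≠ 0) : NonResonant (r * Real.pi) := by
  intro n hn j h
  have hrR : (r : ℝ) ≠ 0 := Rat.cast_ne_zero.2 hr
  refine transcendental_pi ⟨.C (r ^ 2 / 16) * .X ^ 2 + .C (-4 * n * j) * .X +
    .C (-4 * n ^ 2 / r ^ 2), fun h0 => ?_, ?_⟩
  · have := congrArg (Polynomial.coeff · 0) h0
    simp [hn, hr] at this
  · simp only [neg_mul, map_neg, map_mul, map_intCast, map_add, Polynomial.aeval_C, map_div₀,
      eq_ratCast, Rat.cast_ofNat, map_pow, Polynomial.aeval_X]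
    field_simp [Real.pi_ne_zero] at h ⊢
    linear_combination h

/-! ### Directional derivatives and parametric integrals -/

open scoped ContDiff

section DirDeriv

variable {E F : Type*} [NormedAddCommGroup E] [NormedSpace ℝ E] [NormedAddCommGroup F]
  [NormedSpace ℝ F]

/-- The derivative of `u` in the direction `v`, as a function of the base point. It is `0` where `u`
is not differentiable. -/
noncomputable def dirDeriv (v : E) (u : E → F) (p : E) : F := fderiv ℝ u p v

@[fun_prop]
theorem contDiff_dirDeriv {u : E → F} (hu : ContDiff ℝ ∞ u) (v : E) :
    ContDiff ℝ ∞ (dirDeriv v u) :=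
  (hu.fderiv_right (by simp)).clm_apply contDiff_const

@[fun_prop]
theorem differentiable_dirDeriv {u : E → F} (hu : ContDiff ℝ ∞ u) (v : E) :
    Differentiable ℝ (dirDeriv v u) :=
  (contDiff_dirDeriv hu v).differentiable (by simp)

@[fun_prop]
theorem continuous_dirDeriv {u : E → F} (hu : ContDiff ℝ ∞ u) (v : E) :
    Continuous (dirDeriv v u) :=
  (contDiff_dirDeriv hu v).continuous

theorem hasDerivAt_comp_dirDeriv {u : E → F} {γ : ℝ → E} {v : E} {t : ℝ}
    (hu : DifferentiableAt ℝ u (γ t)) (hγ : HasDerivAt γ v t) :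
    HasDerivAt (fun s => u (γ s)) (dirDeriv v u (γ t)) t :=
  hu.hasFDerivAt.comp_hasDerivAt t hγ

theorem dirDeriv_comp_add (v w : E) (u : E → F) (p : E) :
    dirDeriv v (fun p => u (p + w)) p = dirDeriv v u (p + w) := by
  simp only [dirDeriv, fderiv_comp_add_right]

theorem dirDeriv_const (v : E) (c : F) (p : E) : dirDeriv v (fun _ => c) p = 0 := by
  simp [dirDeriv]

theorem dirDeriv_add {u w : E → F} {p : E} (hu : DifferentiableAt ℝ u p)
    (hw : DifferentiableAt ℝ w p) (v : E) :
    dirDeriv v (fun p => u p + w p) p = dirDeriv v u p + dirDeriv v w p := by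
  simp only [dirDeriv, fderiv_fun_add hu hw, add_apply]

theorem dirDeriv_mul {u w : E → ℂ} {p : E} (hu : DifferentiableAt ℝ u p)
    (hw : DifferentiableAt ℝ w p) (v : E) :
    dirDeriv v (fun p => u p * w p) p = dirDeriv v u p * w p + u p * dirDeriv v w p := by
  simp only [dirDeriv, fderiv_fun_mul hu hw, add_apply, smul_apply, smul_eq_mul]
  ring

theorem dirDeriv_const_mul {u : E → ℂ} {p : E} (hu : DifferentiableAt ℝ u p) (c : ℂ) (v : E) :
    dirDeriv v (fun p => c * u p) p = c * dirDeriv v u p := by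
  simp only [dirDeriv_mul (differentiableAt_const c) hu, dirDeriv_const, zero_mul, zero_add]

theorem dirDeriv_conj {u : E → ℂ} {p : E} (hu : DifferentiableAt ℝ u p) (v : E) :
    dirDeriv v (fun p => (starRingEnd ℂ) (u p)) p = (starRingEnd ℂ) (dirDeriv v u p) := by
  have h : HasFDerivAt (fun p => (starRingEnd ℂ) (u p)) _ p :=
    conjCLE.toContinuousLinearMap.hasFDerivAt.comp p hu.hasFDerivAt
  simp [dirDeriv, h.fderiv]

theorem dirDeriv_comm {u : E → F} (hu : ContDiff ℝ ∞ u) (v w : E) (p : E) :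
    dirDeriv v (dirDeriv w u) p = dirDeriv w (dirDeriv v u) p := by
  have hd : DifferentiableAt ℝ (fderiv ℝ u) p :=
    (hu.fderiv_right (m := ∞) (by simp)).differentiable (by simp) p
  have second_fderiv (v w : E) : dirDeriv v (dirDeriv w u) p = fderiv ℝ (fderiv ℝ u) p v w := by
    change fderiv ℝ (fun p => fderiv ℝ u p w) p v = _
    simp [fderiv_clm_apply hd (differentiableAt_const w)]
  rw [second_fderiv, second_fderiv]
  exact (contDiff_infty.1 hu 2).contDiffAt.isSymmSndFDerivAt (by simp) v w

end DirDeriv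

section ParametricIntegral

universe u

variable {E F : Type u} [NormedAddCommGroup E] [NormedSpace ℝ E] [FiniteDimensional ℝ E]
  [NormedAddCommGroup F] [NormedSpace ℝ F]

theorem hasFDerivAt_intervalIntegral_of_contDiff {f : E × ℝ → F} (hf : ContDiff ℝ 1 f)
    (a b : ℝ) (e : E) :
    HasFDerivAt (fun e => ∫ s in a..b, f (e, s))
      (∫ s in a..b, (fderiv ℝ f (e, s)).comp (ContinuousLinearMap.inl ℝ E ℝ)) e := by
  have hcont : Continuous fun p : E × ℝ => (fderiv ℝ f p).comp (ContinuousLinearMap.inl ℝ E ℝ) :=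
    (hf.continuous_fderiv one_ne_zero).clm_comp continuous_const
  have : ProperSpace E := FiniteDimensional.proper ℝ E
  obtain ⟨C, hC⟩ := ((isCompact_closedBall e 1).prod
    (isCompact_uIcc (a := a) (b := b))).exists_bound_of_continuousOn hcont.continuousOn
  refine intervalIntegral.hasFDerivAt_integral_of_dominated_of_fderiv_le
    (F := fun e s => f (e, s))
    (F' := fun e s => (fderiv ℝ f (e, s)).comp (ContinuousLinearMap.inl ℝ E ℝ))
    (bound := fun _ => C) (Metric.closedBall_mem_nhds e one_pos)
    ?_ ?_ ?_ ?_ intervalIntegrable_const ?_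
  · exact Filter.Eventually.of_forall fun x =>
      (hf.continuous.comp (Continuous.prodMk_right x)).aestronglyMeasurable
  · exact (hf.continuous.comp (Continuous.prodMk_right e)).intervalIntegrable _ _
  · exact (hcont.comp (Continuous.prodMk_right e)).aestronglyMeasurable
  · exact Filter.Eventually.of_forall fun s hs x hx => hC (x, s) ⟨hx, Set.uIoc_subset_uIcc hs⟩
  · exact Filter.Eventually.of_forall fun s _ x _ =>
      (hf.differentiable one_ne_zero _).hasFDerivAt.comp x (hasFDerivAt_prodMk_left x s)

theorem contDiff_nat_intervalIntegral (n : ℕ) (a b : ℝ) {f : E × ℝ → F} (hf : ContDiff ℝ n f) :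
    ContDiff ℝ n fun e => ∫ s in a..b, f (e, s) := by
  induction n generalizing F with
  | zero =>
    rw [Nat.cast_zero, contDiff_zero] at hf ⊢
    exact intervalIntegral.continuous_parametric_intervalIntegral_of_continuous'
      (f := fun e s => f (e, s)) hf a b
  | succ n ih =>
    push_cast at hf ⊢
    rw [contDiff_succ_iff_hasFDerivAt]
    exact ⟨_, ih ((hf.fderiv_right le_rfl).clm_comp contDiff_const),
      hasFDerivAt_intervalIntegral_of_contDiff (hf.of_le (by simp)) a b⟩

theorem contDiff_intervalIntegral (a b : ℝ) {f : E × ℝ → F} (hf : ContDiff ℝ ∞ f) :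
    ContDiff ℝ ∞ fun e => ∫ s in a..b, f (e, s) :=
  contDiff_infty.2 fun n => contDiff_nat_intervalIntegral n a b (contDiff_infty.1 hf n)

theorem dirDeriv_intervalIntegral (a b : ℝ) {f : E × ℝ → F} (hf : ContDiff ℝ 1 f) (v e : E) :
    dirDeriv v (fun e => ∫ s in a..b, f (e, s)) e = ∫ s in a..b, dirDeriv (v, 0) f (e, s) := by
  have hcont : Continuous fun s : ℝ =>
      (fderiv ℝ f (e, s)).comp (ContinuousLinearMap.inl ℝ E ℝ) :=
    ((hf.continuous_fderiv one_ne_zero).comp (Continuous.prodMk_right e)).clm_comp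
      continuous_const
  rw [dirDeriv, (hasFDerivAt_intervalIntegral_of_contDiff hf a b e).fderiv,
    ContinuousLinearMap.intervalIntegral_apply (hcont.intervalIntegrable _ _)]
  rfl

end ParametricIntegral

/-! ### Fourier series on the circle and on the torus -/

/-- The character `s ↦ exp(2πi n s)` of `ℝ/ℤ`, as a function on `ℝ`. -/
noncomputable def circleChar (n : ℤ) (s : ℝ) : ℂ := exp (2 * Real.pi * n * s * I)

theorem circleChar_add (n : ℤ) (s t : ℝ) :
    circleChar n (s + t) = circleChar n s * circleChar n t := by
  simp only [circleChar, ← exp_add]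
  push_cast
  ring_nf

theorem circleChar_zero_left (s : ℝ) : circleChar 0 s = 1 := by simp [circleChar]

theorem circleChar_zero_right (n : ℤ) : circleChar n 0 = 1 := by simp [circleChar]

theorem circleChar_add_one (n : ℤ) (s : ℝ) : circleChar n (s + 1) = circleChar n s := by
  have h : circleChar n 1 = 1 := by
    rw [circleChar, ← exp_int_mul_two_pi_mul_I n]
    push_cast
    ring_nf
  rw [circleChar_add, h, mul_one]

theorem circleChar_mul_conj (n : ℤ) (s : ℝ) :
    circleChar n s * (starRingEnd ℂ) (circleChar n s) = 1 := by
  have h : circleChar n s = exp ((2 * Real.pi * n * s : ℝ) * I) := by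
    simp only [circleChar]
    push_cast
    rfl
  rw [mul_conj', h, norm_exp_ofReal_mul_I]
  norm_num

@[fun_prop]
theorem contDiff_circleChar (n : ℤ) : ContDiff ℝ ∞ (circleChar n) := by
  have : ContDiff ℝ ∞ (fun s : ℝ => (s : ℂ)) := ofRealCLM.contDiff
  unfold circleChar
  fun_prop

@[fun_prop]
theorem continuous_circleChar (n : ℤ) : Continuous (circleChar n) :=
  (contDiff_circleChar n).continuous

theorem hasDerivAt_circleChar (n : ℤ) (s : ℝ) :
    HasDerivAt (circleChar n) (2 * Real.pi * n * I * circleChar n s) s := by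
  have hid : HasDerivAt (fun s : ℝ => (s : ℂ)) 1 s := ofRealCLM.hasDerivAt
  unfold circleChar
  convert ((hid.const_mul (2 * Real.pi * n : ℂ)).mul_const I).cexp using 1
  ring

/-- The `n`-th Fourier coefficient of a `1`-periodic function on `ℝ`. -/
noncomputable def circleCoeff (n : ℤ) (h : ℝ → ℂ) : ℂ :=
  ∫ s in (0 : ℝ)..1, circleChar (-n) s * h s

theorem circleCoeff_const_mul (n : ℤ) (c : ℂ) (h : ℝ → ℂ) :
    circleCoeff n (fun s => c * h s) = c * circleCoeff n h := by
  simp only [circleCoeff, ← intervalIntegral.integral_const_mul, mul_left_comm]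

theorem circleCoeff_comp_sub (n : ℤ) {h : ℝ → ℂ} (hp : ∀ s, h (s + 1) = h s) (y : ℝ) :
    circleCoeff n (fun z => h (z - y)) = circleChar (-n) y * circleCoeff n h := by
  have hper : Function.Periodic (fun z => circleChar (-n) z * h z) 1 := fun z => by
    simp only [circleChar_add_one, hp]
  have hshift (z : ℝ) : circleChar (-n) z * h (z - y) =
      circleChar (-n) y * (circleChar (-n) (z - y) * h (z - y)) := by
    rw [← mul_assoc, ← circleChar_add, add_sub_cancel]
  simp only [circleCoeff, hshift]
  rw [intervalIntegral.integral_const_mul,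
    intervalIntegral.integral_comp_sub_right (fun z => circleChar (-n) z * h z) y]
  have := hper.intervalIntegral_add_eq (0 - y) 0
  rw [zero_add, show (0 : ℝ) - y + 1 = 1 - y by ring] at this
  rw [this]

/-- The Fourier series of `h` is a finite sum, hence summable, and therefore converges to `h`. -/
theorem eq_sum_circleCoeff {h : ℝ → ℂ} (hh : Continuous h) (hp : ∀ s, h (s + 1) = h s)
    {S : Finset ℤ} (hS : ∀ n ∉ S, circleCoeff n h = 0) (s : ℝ) :
    h s = ∑ n ∈ S, circleCoeff n h * circleChar n s := by
  have : Fact ((0 : ℝ) < 1) := ⟨one_pos⟩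
  have hper : Function.Periodic h 1 := hp
  let H : C(AddCircle (1 : ℝ), ℂ) := ⟨hper.lift, continuous_coinduced_dom.2 hh⟩
  have hH (s : ℝ) : H (s : AddCircle (1 : ℝ)) = h s := hper.lift_coe s
  have hchar (n : ℤ) (s : ℝ) : (fourier n (s : AddCircle (1 : ℝ)) : ℂ) = circleChar n s := by
    rw [fourier_coe_apply, circleChar]
    push_cast
    ring_nf
  have hcoeff (n : ℤ) : fourierCoeff H n = circleCoeff n h := by
    simp [fourierCoeff_eq_intervalIntegral H n 0, hchar, hH, circleCoeff]
  have hsum : Summable (fourierCoeff H) :=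
    summable_of_ne_finset_zero (s := S) fun n hn => by rw [hcoeff, hS n hn]
  have hfin : HasSum (fun n => fourierCoeff H n • (fourier n (s : AddCircle (1 : ℝ)) : ℂ))
      (∑ n ∈ S, fourierCoeff H n • (fourier n (s : AddCircle (1 : ℝ)) : ℂ)) :=
    hasSum_sum_of_ne_finset_zero fun n hn => by rw [hcoeff, hS n hn, zero_smul]
  have hlim := (has_pointwise_sum_fourier_series_of_summable hsum s).unique hfin
  simpa only [hH, hcoeff, hchar, smul_eq_mul] using hlim

/-- The integral over the unit square, a fundamental domain of the torus `ℝ²/ℤ²`. -/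
noncomputable def squareIntegral (u : ℝ × ℝ → ℂ) : ℂ :=
  ∫ x in (0 : ℝ)..1, ∫ y in (0 : ℝ)..1, u (x, y)

theorem squareIntegral_add {u v : ℝ × ℝ → ℂ} (hu : Continuous u) (hv : Continuous v) :
    squareIntegral (fun p => u p + v p) = squareIntegral u + squareIntegral v := by
  have hinner {w : ℝ × ℝ → ℂ} (hw : Continuous w) :
      IntervalIntegrable (fun x => ∫ y in (0 : ℝ)..1, w (x, y)) volume 0 1 :=
    (intervalIntegral.continuous_parametric_intervalIntegral_of_continuous'
      (f := fun x y => w (x, y)) hw 0 1).intervalIntegrable _ _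
  simp only [squareIntegral, ← intervalIntegral.integral_add (hinner hu) (hinner hv)]
  congr! 2 with x
  exact intervalIntegral.integral_add
    ((hu.comp (Continuous.prodMk_right x)).intervalIntegrable _ _)
    ((hv.comp (Continuous.prodMk_right x)).intervalIntegrable _ _)

theorem squareIntegral_const_mul (c : ℂ) (u : ℝ × ℝ → ℂ) :
    squareIntegral (fun p => c * u p) = c * squareIntegral u := by
  simp only [squareIntegral, intervalIntegral.integral_const_mul]

theorem squareIntegral_zero : squareIntegral (fun _ => 0) = 0 := by simp [squareIntegral]

section

variable {E : Type} [NormedAddCommGroup E] [NormedSpace ℝ E] [FiniteDimensional ℝ E]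
  {u : E × (ℝ × ℝ) → ℂ}

theorem contDiff_squareIntegral (hu : ContDiff ℝ ∞ u) :
    ContDiff ℝ ∞ fun e => squareIntegral fun p => u (e, p) :=
  contDiff_intervalIntegral 0 1 (f := fun q : E × ℝ => ∫ y in (0 : ℝ)..1, u (q.1, (q.2, y)))
    (contDiff_intervalIntegral 0 1 (f := fun q : (E × ℝ) × ℝ => u (q.1.1, (q.1.2, q.2)))
      (by fun_prop))

theorem dirDeriv_squareIntegral (hu : ContDiff ℝ ∞ u) (v e : E) :
    dirDeriv v (fun e => squareIntegral fun p => u (e, p)) e =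
      squareIntegral fun p => dirDeriv (v, 0) u (e, p) := by
  have hassoc : ContDiff ℝ ∞ fun q : (E × ℝ) × ℝ => u (q.1.1, (q.1.2, q.2)) := by fun_prop
  have hchain (x y : ℝ) : dirDeriv ((v, (0 : ℝ)), (0 : ℝ))
      (fun q : (E × ℝ) × ℝ => u (q.1.1, (q.1.2, q.2))) ((e, x), y) =
      dirDeriv (v, 0) u (e, (x, y)) := by
    have h : HasFDerivAt (fun q : (E × ℝ) × ℝ => (q.1.1, (q.1.2, q.2)))
        (ContinuousLinearEquiv.prodAssoc ℝ E ℝ ℝ : _ →L[ℝ] _) ((e, x), y) :=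
      (ContinuousLinearEquiv.prodAssoc ℝ E ℝ ℝ).hasFDerivAt
    have hc : HasFDerivAt (fun q : (E × ℝ) × ℝ => u (q.1.1, (q.1.2, q.2))) _ ((e, x), y) :=
      (hu.differentiable (by simp) (e, (x, y))).hasFDerivAt.comp ((e, x), y) h
    rw [dirDeriv, hc.fderiv]
    rfl
  simp only [squareIntegral, ← hchain]
  rw [dirDeriv_intervalIntegral 0 1
    (f := fun q : E × ℝ => ∫ y in (0 : ℝ)..1, u (q.1, (q.2, y)))
    ((contDiff_intervalIntegral 0 1 hassoc).of_le (by simp))]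
  congr! 2 with x
  exact dirDeriv_intervalIntegral 0 1 (hassoc.of_le (by simp)) (v, 0) (e, x)

end

/-- Functions on `ℝ²` that descend to the torus `ℝ²/ℤ²`. -/
def DoublyPeriodic (u : ℝ × ℝ → ℂ) : Prop :=
  (∀ x y, u (x + 1, y) = u (x, y)) ∧ ∀ x y, u (x, y + 1) = u (x, y)

theorem squareIntegral_dirDeriv_eq_zero {u : ℝ × ℝ → ℂ} (hu : ContDiff ℝ ∞ u)
    (hp : DoublyPeriodic u) (v : ℝ × ℝ) : squareIntegral (dirDeriv v u) = 0 := by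
  have hdiff : Differentiable ℝ u := hu.differentiable (by simp)
  have hX : squareIntegral (dirDeriv (1, 0) u) = 0 := by
    have hinner : ContDiff ℝ ∞ fun x => ∫ y in (0 : ℝ)..1, u (x, y) :=
      contDiff_intervalIntegral 0 1 hu
    simp only [squareIntegral, ← dirDeriv_intervalIntegral 0 1 (hu.of_le (by simp)) (1 : ℝ)]
    rw [intervalIntegral.integral_eq_sub_of_hasDerivAt
      (fun x _ => hasDerivAt_comp_dirDeriv (hinner.differentiable (by simp) x) (hasDerivAt_id x))
      ((continuous_dirDeriv hinner 1).intervalIntegrable _ _)]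
    simp only [← hp.1 0, zero_add, sub_self]
  have hY : squareIntegral (dirDeriv (0, 1) u) = 0 := by
    have hinner (x : ℝ) : ∫ y in (0 : ℝ)..1, dirDeriv (0, 1) u (x, y) = 0 := by
      have hderiv (y : ℝ) : HasDerivAt (fun y => u (x, y)) (dirDeriv (0, 1) u (x, y)) y :=
        hasDerivAt_comp_dirDeriv (hdiff _) ((hasDerivAt_const y x).prodMk (hasDerivAt_id y))
      rw [intervalIntegral.integral_eq_sub_of_hasDerivAt (fun y _ => hderiv y)
        (((continuous_dirDeriv hu _).comp (Continuous.prodMk_right x)).intervalIntegrable _ _)]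
      simp only [← hp.2 x 0, zero_add, sub_self]
    simp [squareIntegral, hinner]
  have hv : dirDeriv v u = fun p => v.1 * dirDeriv (1, 0) u p + v.2 * dirDeriv (0, 1) u p := by
    ext p
    have : v = v.1 • (1, 0) + v.2 • ((0 : ℝ), (1 : ℝ)) := by simp
    simp only [dirDeriv, ← real_smul, ← map_smul, ← map_add, ← this]
  rw [hv, squareIntegral_add (by fun_prop) (by fun_prop), squareIntegral_const_mul,
    squareIntegral_const_mul, hX, hY, mul_zero, mul_zero, add_zero]

/-- The character `(x, y) ↦ exp(2πi (l x + m y))` of `ℝ²/ℤ²` at the frequency `c = (l, m)`, as a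
function on `ℝ²`. -/
noncomputable def torusChar (c : ℤ × ℤ) (p : ℝ × ℝ) : ℂ :=
  circleChar c.1 p.1 * circleChar c.2 p.2

@[fun_prop]
theorem contDiff_torusChar (c : ℤ × ℤ) : ContDiff ℝ ∞ (torusChar c) :=
  ((contDiff_circleChar c.1).comp contDiff_fst).mul ((contDiff_circleChar c.2).comp contDiff_snd)

@[fun_prop]
theorem continuous_torusChar (c : ℤ × ℤ) : Continuous (torusChar c) :=
  (contDiff_torusChar c).continuous

theorem doublyPeriodic_torusChar (c : ℤ × ℤ) : DoublyPeriodic (torusChar c) :=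
  ⟨fun x y => by simp only [torusChar, circleChar_add_one],
    fun x y => by simp only [torusChar, circleChar_add_one]⟩

theorem dirDeriv_torusChar (c : ℤ × ℤ) (v p : ℝ × ℝ) :
    dirDeriv v (torusChar c) p = 2 * Real.pi * I * (c.1 * v.1 + c.2 * v.2) * torusChar c p := by
  have hfst := (hasDerivAt_circleChar c.1 p.1).hasFDerivAt.comp p (hasFDerivAt_fst (𝕜 := ℝ))
  have hsnd := (hasDerivAt_circleChar c.2 p.2).hasFDerivAt.comp p (hasFDerivAt_snd (𝕜 := ℝ))
  have h : HasFDerivAt (torusChar c) _ p := hfst.mul hsnd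
  rw [dirDeriv, h.fderiv]
  simp [torusChar]
  ring

/-- The Fourier coefficient at the frequency `c` of a function on the torus `ℝ²/ℤ²`. -/
noncomputable def torusCoeff (c : ℤ × ℤ) (u : ℝ × ℝ → ℂ) : ℂ :=
  squareIntegral fun p => torusChar (-c) p * u p

theorem torusCoeff_add (c : ℤ × ℤ) {u v : ℝ × ℝ → ℂ} (hu : Continuous u) (hv : Continuous v) :
    torusCoeff c (fun p => u p + v p) = torusCoeff c u + torusCoeff c v := by
  simp only [torusCoeff, mul_add]
  exact squareIntegral_add (by fun_prop) (by fun_prop)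

theorem torusCoeff_const_mul (c : ℤ × ℤ) (w : ℂ) (u : ℝ × ℝ → ℂ) :
    torusCoeff c (fun p => w * u p) = w * torusCoeff c u := by
  simp only [torusCoeff, ← squareIntegral_const_mul, mul_left_comm]

theorem torusCoeff_zero (c : ℤ × ℤ) : torusCoeff c (fun _ => 0) = 0 := by
  simp only [torusCoeff, mul_zero, squareIntegral_zero]

theorem torusCoeff_eq_circleCoeff (c : ℤ × ℤ) (u : ℝ × ℝ → ℂ) :
    torusCoeff c u = circleCoeff c.1 fun s => circleCoeff c.2 fun r => u (s, r) := by
  simp only [torusCoeff, squareIntegral, circleCoeff, torusChar, mul_assoc,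
    intervalIntegral.integral_const_mul, Prod.fst_neg, Prod.snd_neg]

theorem torusCoeff_dirDeriv (c : ℤ × ℤ) {u : ℝ × ℝ → ℂ} (hu : ContDiff ℝ ∞ u)
    (hp : DoublyPeriodic u) (v : ℝ × ℝ) :
    torusCoeff c (dirDeriv v u) =
      2 * Real.pi * I * (c.1 * v.1 + c.2 * v.2) * torusCoeff c u := by
  have hχ := doublyPeriodic_torusChar (-c)
  have hparts := squareIntegral_dirDeriv_eq_zero ((contDiff_torusChar (-c)).mul hu)
    ⟨fun x y => by simp only [hp.1, hχ.1], fun x y => by simp only [hp.2, hχ.2]⟩ v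
  have hleibniz : dirDeriv v (fun p => torusChar (-c) p * u p) = fun p =>
      (-(2 * Real.pi * I * (c.1 * v.1 + c.2 * v.2))) * (torusChar (-c) p * u p) +
        torusChar (-c) p * dirDeriv v u p := by
    ext p
    rw [dirDeriv_mul ((contDiff_torusChar _).differentiable (by simp) p)
      (hu.differentiable (by simp) p), dirDeriv_torusChar]
    push_cast [Prod.fst_neg, Prod.snd_neg]
    ring
  rw [hleibniz, squareIntegral_add (by fun_prop) (by fun_prop), squareIntegral_const_mul] at hparts
  simp only [torusCoeff]
  linear_combination hparts

theorem eq_sum_torusCoeff {u : ℝ × ℝ → ℂ} (hu : Continuous u) (hp : DoublyPeriodic u)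
    {T : Finset (ℤ × ℤ)} (hT : ∀ c ∉ T, torusCoeff c u = 0) (p : ℝ × ℝ) :
    u p = ∑ c ∈ T, torusCoeff c u * torusChar c p := by
  obtain ⟨s, r⟩ := p
  have hinner (n : ℤ) (s : ℝ) : circleCoeff n (fun r => u (s, r)) =
      ∑ k ∈ T.image Prod.fst, torusCoeff (k, n) u * circleChar k s := by
    have hcont : Continuous fun s => circleCoeff n fun r => u (s, r) :=
      intervalIntegral.continuous_parametric_intervalIntegral_of_continuous'
        (f := fun s r => circleChar (-n) r * u (s, r)) (by unfold Function.uncurry; fun_prop) 0 1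
    simp only [torusCoeff_eq_circleCoeff]
    refine eq_sum_circleCoeff hcont (fun s => by simp only [hp.1]) (fun k hk => ?_) s
    rw [← torusCoeff_eq_circleCoeff (k, n)]
    exact hT (k, n) fun h => hk (Finset.mem_image_of_mem Prod.fst h)
  have houter : u (s, r) = ∑ n ∈ T.image Prod.snd, circleCoeff n (fun r => u (s, r)) *
      circleChar n r := by
    refine eq_sum_circleCoeff (h := fun r => u (s, r)) (by fun_prop) (hp.2 s) (fun n hn => ?_) r
    rw [hinner]
    refine Finset.sum_eq_zero fun k _ => ?_
    rw [hT (k, n) fun h => hn (Finset.mem_image_of_mem Prod.snd h), zero_mul]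
  have hprod : u (s, r) = ∑ c ∈ T.image Prod.fst ×ˢ T.image Prod.snd,
      torusCoeff c u * torusChar c (s, r) := by
    simp only [houter, hinner, Finset.sum_product_right, Finset.sum_mul, torusChar, mul_assoc]
  rw [hprod]
  refine (Finset.sum_subset (fun c hc => ?_) (fun c _ hc => by rw [hT c hc, zero_mul])).symm
  exact Finset.mem_product.2 ⟨Finset.mem_image_of_mem _ hc, Finset.mem_image_of_mem _ hc⟩

section

variable {E : Type} [NormedAddCommGroup E] [NormedSpace ℝ E] [FiniteDimensional ℝ E]
  {u : E × (ℝ × ℝ) → ℂ}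

theorem contDiff_torusCoeff (c : ℤ × ℤ) (hu : ContDiff ℝ ∞ u) :
    ContDiff ℝ ∞ fun e => torusCoeff c fun p => u (e, p) :=
  contDiff_squareIntegral (u := fun q => torusChar (-c) q.2 * u q) (by fun_prop)

theorem dirDeriv_torusCoeff (c : ℤ × ℤ) (hu : ContDiff ℝ ∞ u) (v e : E) :
    dirDeriv v (fun e => torusCoeff c fun p => u (e, p)) e =
      torusCoeff c fun p => dirDeriv (v, 0) u (e, p) := by
  have hχ : Differentiable ℝ fun q : E × (ℝ × ℝ) => torusChar (-c) q.2 :=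
    ((contDiff_torusChar (-c)).comp contDiff_snd).differentiable (by simp)
  have hχ_zero (p : ℝ × ℝ) :
      dirDeriv (v, (0 : ℝ × ℝ)) (fun q : E × (ℝ × ℝ) => torusChar (-c) q.2) (e, p) = 0 := by
    have h := (((contDiff_torusChar (-c)).differentiable (by simp)) p).hasFDerivAt.comp (e, p)
      (hasFDerivAt_snd (𝕜 := ℝ) (E := E))
    have h' : HasFDerivAt (fun q : E × (ℝ × ℝ) => torusChar (-c) q.2) _ (e, p) := h
    simp [dirDeriv, h'.fderiv]
  simp only [torusCoeff]
  rw [dirDeriv_squareIntegral (u := fun q => torusChar (-c) q.2 * u q) (by fun_prop)]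
  congr 1
  ext p
  rw [dirDeriv_mul (hχ _) (hu.differentiable (by simp) _), hχ_zero, zero_mul, zero_add]

end

/-! ### Ladder operators -/

section Ladder

open Module.End
open scoped InnerProductSpace

variable {V : Type*} [NormedAddCommGroup V] [InnerProductSpace ℂ V] {A B : Module.End ℂ V}
  {l : ℂ} {M : ℝ}

theorem re_nonneg_of_hasEigenvalue_mul (hadj : ∀ u v, ⟪B u, v⟫_ℂ = ⟪u, A v⟫_ℂ)
    (hl : HasEigenvalue (B * A) l) : 0 ≤ l.re := by
  obtain ⟨u, hu⟩ := hl.exists_hasEigenvector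
  have hnorm : (‖A u‖ ^ 2 : ℂ) = (starRingEnd ℂ) l * ‖u‖ ^ 2 := calc
    (‖A u‖ ^ 2 : ℂ) = ⟪B (A u), u⟫_ℂ := by rw [hadj, inner_self_eq_norm_sq_to_K]; rfl
    _ = (starRingEnd ℂ) l * ‖u‖ ^ 2 := by
      rw [← Module.End.mul_apply, hu.apply_eq_smul, inner_smul_left, inner_self_eq_norm_sq_to_K]
      rfl
  have hre : ‖A u‖ ^ 2 = l.re * ‖u‖ ^ 2 := by
    simpa [← ofReal_pow] using congrArg Complex.re hnorm
  have hu0 : 0 < ‖u‖ ^ 2 := by have := norm_pos_iff.2 hu.2; positivity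
  exact nonneg_of_mul_nonneg_left (hre ▸ sq_nonneg _) hu0

theorem hasEigenvalue_mul_sub (hcomm : A * B = B * A - (M : ℂ) • 1)
    (hl : HasEigenvalue (B * A) l) (hne : l ≠ M) : HasEigenvalue (B * A) (l - M) := by
  obtain ⟨u, hu⟩ := hl.exists_hasEigenvector
  have hAB : A (B u) = (l - M) • u := by
    rw [← Module.End.mul_apply, hcomm, sub_smul, ← hu.apply_eq_smul]
    simp
  refine hasEigenvalue_of_hasEigenvector (x := B u) ⟨mem_eigenspace_iff.2 ?_, fun hB => ?_⟩
  · rw [Module.End.mul_apply, hAB, map_smul]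
  · rw [hB, map_zero] at hAB
    exact (smul_ne_zero (sub_ne_zero.2 hne) hu.2) hAB.symm

/-- `B` lowers the eigenvalues of `B * A` by `M`, which must stop before they become negative. -/
theorem exists_nat_eq_mul_of_hasEigenvalue (hadj : ∀ u v, ⟪B u, v⟫_ℂ = ⟪u, A v⟫_ℂ)
    (hcomm : A * B = B * A - (M : ℂ) • 1) (hM : 0 < M) (hl : HasEigenvalue (B * A) l) :
    ∃ j : ℕ, l = M * j := by
  obtain ⟨k, hk⟩ := exists_nat_gt (l.re / M)
  rw [div_lt_iff₀ hM] at hk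
  induction k generalizing l with
  | zero => exact absurd (re_nonneg_of_hasEigenvalue_mul hadj hl) (by simpa using hk)
  | succ k ih =>
    by_cases h : l = M
    · exact ⟨1, by simp [h]⟩
    · have hlt : (l - M).re < k * M := by
        push_cast at hk
        simp only [sub_re, ofReal_re]
        linarith
      obtain ⟨j, hj⟩ := ih (hasEigenvalue_mul_sub hcomm hl h) hlt
      exact ⟨j + 1, by push_cast; linear_combination hj⟩

theorem exists_int_eq_mul_of_hasEigenvalue (hadj : ∀ u v, ⟪B u, v⟫_ℂ = ⟪u, A v⟫_ℂ)
    (hcomm : A * B = B * A - (M : ℂ) • 1) (hM : M ≠ 0) (hl : HasEigenvalue (B * A) l) :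
    ∃ j : ℤ, l = M * j := by
  rcases lt_or_gt_of_ne hM with hneg | hpos
  · have hadj' (u v : V) : ⟪A u, v⟫_ℂ = ⟪u, B v⟫_ℂ := by
      rw [← inner_conj_symm, ← hadj, inner_conj_symm]
    have hcomm' : B * A = A * B - ((-M : ℝ) : ℂ) • 1 := by
      rw [hcomm, ofReal_neg]
      module
    have hl' : HasEigenvalue (A * B) (l - M) := by
      obtain ⟨u, hu⟩ := hl.exists_hasEigenvector
      refine hasEigenvalue_of_hasEigenvector ⟨mem_eigenspace_iff.2 ?_, hu.2⟩
      rw [hcomm, sub_smul, ← hu.apply_eq_smul]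
      simp
    obtain ⟨j, hj⟩ := exists_nat_eq_mul_of_hasEigenvalue hadj' hcomm' (neg_pos.2 hneg) hl'
    exact ⟨1 - j, by push_cast at hj ⊢; linear_combination hj⟩
  · obtain ⟨j, hj⟩ := exists_nat_eq_mul_of_hasEigenvalue hadj hcomm hpos hl
    exact ⟨j, by exact_mod_cast hj⟩

end Ladder

/-! ### Quasi-periodic functions -/

/-- The smooth functions `u` on `ℝ²` with `u (x + 1, y) = exp(-2πi n y) u (x, y)` and
`u (x, y + 1) = u (x, y)`, i.e. the sections of the line bundle of degree `n` over the torus formed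
by the `z`-modes of frequency `n` of the functions on `KT⁴`. -/
def quasiPeriodic (n : ℤ) : Submodule ℂ (ℝ × ℝ → ℂ) where
  carrier := {u | ContDiff ℝ ∞ u ∧ (∀ x y, u (x + 1, y) = circleChar (-n) y * u (x, y)) ∧
    ∀ x y, u (x, y + 1) = u (x, y)}
  add_mem' := fun {u v} hu hv =>
    ⟨hu.1.add hv.1, fun x y => by simp only [Pi.add_apply, hu.2.1, hv.2.1, mul_add],
      fun x y => by simp only [Pi.add_apply, hu.2.2, hv.2.2]⟩
  zero_mem' := ⟨contDiff_const, fun x y => by simp, fun x y => rfl⟩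
  smul_mem' := fun c u hu =>
    ⟨contDiff_const.smul hu.1,
      fun x y => by simp only [Pi.smul_apply, smul_eq_mul, hu.2.1, mul_left_comm],
      fun x y => by simp only [Pi.smul_apply, hu.2.2]⟩

section QuasiPeriodic

variable {n : ℤ} {u v : ℝ × ℝ → ℂ}

@[fun_prop]
theorem contDiff_conj_comp {E : Type*} [NormedAddCommGroup E] [NormedSpace ℝ E] {u : E → ℂ}
    (hu : ContDiff ℝ ∞ u) : ContDiff ℝ ∞ fun p => (starRingEnd ℂ) (u p) :=
  conjCLE.toContinuousLinearMap.contDiff.comp hu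

theorem doublyPeriodic_conj_mul (hu : u ∈ quasiPeriodic n) (hv : v ∈ quasiPeriodic n) :
    DoublyPeriodic fun p => (starRingEnd ℂ) (u p) * v p := by
  refine ⟨fun x y => ?_, fun x y => by simp only [hu.2.2, hv.2.2]⟩
  simp only [hu.2.1, hv.2.1, map_mul]
  linear_combination ((starRingEnd ℂ) (u (x, y)) * v (x, y)) * circleChar_mul_conj (-n) y

theorem eq_zero_of_intervalIntegral_eq_zero {h : ℝ → ℝ} (hc : Continuous h) (h0 : ∀ s, 0 ≤ h s)
    (hi : ∫ s in (0 : ℝ)..1, h s = 0) {s : ℝ} (hs : s ∈ Set.Icc (0 : ℝ) 1) : h s = 0 := by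
  by_contra hne
  exact (intervalIntegral.integral_pos zero_lt_one hc.continuousOn (fun x _ => h0 x)
    ⟨s, hs, (h0 s).lt_of_ne' hne⟩).ne' hi

theorem squareIntegral_conj_mul_self (u : ℝ × ℝ → ℂ) :
    squareIntegral (fun p => (starRingEnd ℂ) (u p) * u p) =
      (∫ x in (0 : ℝ)..1, ∫ y in (0 : ℝ)..1, normSq (u (x, y)) : ℝ) := by
  simp only [squareIntegral, ← normSq_eq_conj_mul_self, intervalIntegral.integral_ofReal]

theorem eq_zero_of_squareIntegral_conj_mul_self (hu : u ∈ quasiPeriodic n)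
    (h : squareIntegral (fun p => (starRingEnd ℂ) (u p) * u p) = 0) : u = 0 := by
  have hcont : Continuous fun p => normSq (u p) := continuous_normSq.comp hu.1.continuous
  have hper : DoublyPeriodic fun p => (starRingEnd ℂ) (u p) * u p := doublyPeriodic_conj_mul hu hu
  have hcont_inner : Continuous fun x => ∫ y in (0 : ℝ)..1, normSq (u (x, y)) :=
    intervalIntegral.continuous_parametric_intervalIntegral_of_continuous'
      (f := fun x y => normSq (u (x, y))) hcont 0 1
  rw [squareIntegral_conj_mul_self, ofReal_eq_zero] at h
  have hsquare {x y : ℝ} (hx : x ∈ Set.Icc (0 : ℝ) 1) (hy : y ∈ Set.Icc (0 : ℝ) 1) :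
      (starRingEnd ℂ) (u (x, y)) * u (x, y) = 0 := by
    have hinner := eq_zero_of_intervalIntegral_eq_zero hcont_inner
      (fun x => intervalIntegral.integral_nonneg zero_le_one fun y _ => normSq_nonneg _) h hx
    rw [← normSq_eq_conj_mul_self, eq_zero_of_intervalIntegral_eq_zero
      (h := fun y => normSq (u (x, y))) (hcont.comp (Continuous.prodMk_right x))
      (fun y => normSq_nonneg _) hinner hy,
      ofReal_zero]
  ext ⟨x, y⟩
  obtain ⟨x', hx', hxx'⟩ := Function.Periodic.exists_mem_Ico₀
    (f := fun x => (starRingEnd ℂ) (u (x, y)) * u (x, y)) (fun x => hper.1 x y) one_pos x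
  obtain ⟨y', hy', hyy'⟩ := Function.Periodic.exists_mem_Ico₀
    (f := fun y => (starRingEnd ℂ) (u (x', y)) * u (x', y)) (hper.2 x') one_pos y
  have hzero := (hxx'.trans hyy').trans (hsquare (Set.Ico_subset_Icc_self hx')
    (Set.Ico_subset_Icc_self hy'))
  rwa [← normSq_eq_conj_mul_self, ofReal_eq_zero, normSq_eq_zero] at hzero

/-- The `L²` inner product over a fundamental domain, on quasi-periodic functions. -/
noncomputable abbrev quasiPeriodicCore (n : ℤ) : InnerProductSpace.Core ℂ (quasiPeriodic n) where
  inner u v := squareIntegral fun p => (starRingEnd ℂ) (u.1 p) * v.1 p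
  conj_inner_symm u v := by
    simp only [squareIntegral, intervalIntegral.integral_of_le zero_le_one, ← integral_conj,
      map_mul, conj_conj, mul_comm]
  re_inner_nonneg u := by
    simp only [squareIntegral_conj_mul_self]
    exact intervalIntegral.integral_nonneg zero_le_one fun x _ =>
      intervalIntegral.integral_nonneg zero_le_one fun y _ => normSq_nonneg _
  add_left u v w := by
    have := u.2.1
    have := v.2.1
    have := w.2.1
    simp only [Submodule.coe_add, Pi.add_apply, map_add, add_mul]
    exact squareIntegral_add (by fun_prop) (by fun_prop)
  smul_left u v c := by
    simp only [Submodule.coe_smul, Pi.smul_apply, smul_eq_mul, map_mul, mul_assoc,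
      squareIntegral_const_mul]
  definite u hu := Subtype.ext (eq_zero_of_squareIntegral_conj_mul_self u.2 hu)

end QuasiPeriodic

local notation "∂ₓ" => dirDeriv ((1 : ℝ), (0 : ℝ))
local notation "∂ᵧ" => dirDeriv ((0 : ℝ), (1 : ℝ))

section LadderOperator

variable {n : ℤ} {u : ℝ × ℝ → ℂ}

/-- The zeroth-order coefficient of `ladderFun`. -/
noncomputable def ladderCoeff (n : ℤ) (s b ε : ℝ) (p : ℝ × ℝ) : ℂ :=
  -(2 * Real.pi * n) * (p.1 - s) - ε * I * b / 4

/-- The first-order operator `ε ∂/∂x + i ∂/∂y - 2πn (x - s) - ε i b / 4`. For `n > 0`, `ε = 1` gives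
the creation and `ε = -1` the annihilation operator of a quantum harmonic oscillator; for `n < 0`
the roles are exchanged. -/
noncomputable def ladderFun (n : ℤ) (s b ε : ℝ) (u : ℝ × ℝ → ℂ) (p : ℝ × ℝ) : ℂ :=
  ε * ∂ₓ u p + I * ∂ᵧ u p + ladderCoeff n s b ε p * u p

@[fun_prop]
theorem contDiff_ladderCoeff (n : ℤ) (s b ε : ℝ) : ContDiff ℝ ∞ (ladderCoeff n s b ε) := by
  have : ContDiff ℝ ∞ (fun s : ℝ => (s : ℂ)) := ofRealCLM.contDiff
  unfold ladderCoeff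
  fun_prop

@[fun_prop]
theorem contDiff_ladderFun (n : ℤ) (s b ε : ℝ) (hu : ContDiff ℝ ∞ u) :
    ContDiff ℝ ∞ (ladderFun n s b ε u) := by
  unfold ladderFun
  fun_prop

theorem dirDeriv_ladderCoeff (n : ℤ) (s b ε : ℝ) (v p : ℝ × ℝ) :
    dirDeriv v (ladderCoeff n s b ε) p = -(2 * Real.pi * n) * v.1 := by
  have hfst : HasFDerivAt (fun p : ℝ × ℝ => (p.1 : ℂ)) _ p :=
    ofRealCLM.hasFDerivAt.comp p hasFDerivAt_fst
  have h : HasFDerivAt (ladderCoeff n s b ε) _ p :=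
    ((hfst.sub_const (s : ℂ)).const_mul (-(2 * Real.pi * n : ℂ))).sub_const (ε * I * b / 4)
  simp [dirDeriv, h.fderiv]

theorem dirDeriv_ladderFun (n : ℤ) (s b ε : ℝ) (hu : ContDiff ℝ ∞ u) (v p : ℝ × ℝ) :
    dirDeriv v (ladderFun n s b ε u) p =
      ε * dirDeriv v (∂ₓ u) p + I * dirDeriv v (∂ᵧ u) p +
        (-(2 * Real.pi * n) * v.1 * u p + ladderCoeff n s b ε p * dirDeriv v u p) := by
  have hx := differentiable_dirDeriv hu (1, 0) p
  have hy := differentiable_dirDeriv hu (0, 1) p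
  have hw := (contDiff_ladderCoeff n s b ε).differentiable (by simp) p
  have hu' := hu.differentiable (by simp) p
  unfold ladderFun
  rw [dirDeriv_add (by fun_prop) (by fun_prop), dirDeriv_add (by fun_prop) (by fun_prop),
    dirDeriv_const_mul hx, dirDeriv_const_mul hy, dirDeriv_mul hw hu', dirDeriv_ladderCoeff]

theorem dirDeriv_add_one_fst (hu : u ∈ quasiPeriodic n) (v : ℝ × ℝ) (x y : ℝ) :
    dirDeriv v u (x + 1, y) =
      circleChar (-n) y * (dirDeriv v u (x, y) - 2 * Real.pi * I * n * v.2 * u (x, y)) := by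
  have hshift : (fun p => u (p + (1, 0))) = fun p => torusChar (0, -n) p * u p := by
    ext ⟨x, y⟩
    simp [torusChar, circleChar_zero_left, hu.2.1]
  have h := dirDeriv_comp_add v (1, 0) u (x, y)
  rw [hshift, dirDeriv_mul ((contDiff_torusChar _).differentiable (by simp) _)
    (hu.1.differentiable (by simp) _), dirDeriv_torusChar, Prod.mk_add_mk, add_zero] at h
  rw [← h]
  simp only [torusChar, circleChar_zero_left]
  push_cast
  ring

theorem dirDeriv_add_one_snd (hu : u ∈ quasiPeriodic n) (v : ℝ × ℝ) (x y : ℝ) :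
    dirDeriv v u (x, y + 1) = dirDeriv v u (x, y) := by
  have hshift : (fun p => u (p + (0, 1))) = u := by
    ext ⟨x, y⟩
    simp [hu.2.2]
  have h := dirDeriv_comp_add v (0, 1) u (x, y)
  rw [hshift, Prod.mk_add_mk, add_zero] at h
  exact h.symm

theorem ladderFun_mem_quasiPeriodic (s b ε : ℝ) (hu : u ∈ quasiPeriodic n) :
    ladderFun n s b ε u ∈ quasiPeriodic n := by
  refine ⟨contDiff_ladderFun n s b ε hu.1, fun x y => ?_, fun x y => ?_⟩
  · simp only [ladderFun, ladderCoeff, dirDeriv_add_one_fst hu, hu.2.1]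
    push_cast
    linear_combination (-(2 * Real.pi * n) * circleChar (-n) y * u (x, y)) * I_sq
  · simp only [ladderFun, ladderCoeff, dirDeriv_add_one_snd hu, hu.2.2]

/-- `ladderFun` as an operator on the quasi-periodic functions. -/
noncomputable def ladder (n : ℤ) (s b ε : ℝ) : Module.End ℂ (quasiPeriodic n) where
  toFun u := ⟨ladderFun n s b ε u, ladderFun_mem_quasiPeriodic s b ε u.2⟩
  map_add' u v := by
    ext p
    have hu := u.2.1.differentiable (by simp) p
    have hv := v.2.1.differentiable (by simp) p
    change ladderFun n s b ε (fun p => u.1 p + v.1 p) p =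
      ladderFun n s b ε u p + ladderFun n s b ε v p
    simp only [ladderFun, dirDeriv_add hu hv]
    ring
  map_smul' c u := by
    ext p
    have hu := u.2.1.differentiable (by simp) p
    change ladderFun n s b ε (fun p => c * u.1 p) p = c * ladderFun n s b ε u p
    simp only [ladderFun, dirDeriv_const_mul hu]
    ring

theorem ladder_mul_ladder_neg (n : ℤ) (s b : ℝ) :
    ladder n s b 1 * ladder n s b (-1) =
      ladder n s b (-1) * ladder n s b 1 - ((2 * (2 * Real.pi * n) : ℝ) : ℂ) • 1 := by
  ext u p
  change ladderFun n s b 1 (ladderFun n s b (-1) u) p =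
    ladderFun n s b (-1) (ladderFun n s b 1 u) p - ((2 * (2 * Real.pi * n) : ℝ) : ℂ) * u.1 p
  rw [ladderFun, ladderFun.eq_def n s b (-1) (ladderFun n s b 1 u)]
  simp only [dirDeriv_ladderFun n s b _ u.2.1, dirDeriv_comm u.2.1 (1, 0) (0, 1)]
  simp only [ladderFun, ladderCoeff]
  push_cast
  ring

theorem conj_ladderCoeff (n : ℤ) (s b ε : ℝ) (p : ℝ × ℝ) :
    (starRingEnd ℂ) (ladderCoeff n s b ε p) = ladderCoeff n s b (-ε) p := by
  simp only [ladderCoeff, map_sub, map_mul, map_div₀, map_neg, conj_ofReal, conj_I, map_ofNat,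
    map_intCast, ofReal_neg]
  ring

/-- Integration by parts: the product of `conj u` and `v` descends to the torus, so there are no
boundary terms. -/
theorem squareIntegral_conj_ladderFun_mul (s b ε : ℝ) {v : ℝ × ℝ → ℂ} (hu : u ∈ quasiPeriodic n)
    (hv : v ∈ quasiPeriodic n) :
    squareIntegral (fun p => (starRingEnd ℂ) (ladderFun n s b (-ε) u p) * v p) =
      squareIntegral fun p => (starRingEnd ℂ) (u p) * ladderFun n s b ε v p := by
  have hu' := hu.1
  have hv' := hv.1
  set w : ℝ × ℝ → ℂ := fun p => (starRingEnd ℂ) (u p) * v p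
  have hw : ContDiff ℝ ∞ w := (contDiff_conj_comp hu').mul hv'
  have hleibniz (d p : ℝ × ℝ) : dirDeriv d w p =
      (starRingEnd ℂ) (dirDeriv d u p) * v p + (starRingEnd ℂ) (u p) * dirDeriv d v p := by
    rw [dirDeriv_mul ((contDiff_conj_comp hu').differentiable (by simp) p)
      (hv'.differentiable (by simp) p), dirDeriv_conj (hu'.differentiable (by simp) p)]
  have hdiv (p : ℝ × ℝ) : (starRingEnd ℂ) (ladderFun n s b (-ε) u p) * v p =
      (starRingEnd ℂ) (u p) * ladderFun n s b ε v p + (-ε * ∂ₓ w p + -I * ∂ᵧ w p) := by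
    simp only [hleibniz, ladderFun, map_add, map_mul, map_neg, conj_ofReal, conj_I,
      conj_ladderCoeff, ofReal_neg, neg_neg]
    ring
  have hper := doublyPeriodic_conj_mul hu hv
  simp only [hdiv]
  rw [squareIntegral_add (by fun_prop) (by fun_prop), squareIntegral_add (by fun_prop)
    (by fun_prop), squareIntegral_const_mul, squareIntegral_const_mul,
    squareIntegral_dirDeriv_eq_zero hw hper, squareIntegral_dirDeriv_eq_zero hw hper]
  ring

theorem exists_int_of_hasEigenvalue_ladder (hn : n ≠ 0) (s b : ℝ) {l : ℂ}
    (hl : (ladder n s b (-1) * ladder n s b 1).HasEigenvalue l) :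
    ∃ j : ℤ, l = 2 * (2 * Real.pi * n) * j := by
  let : NormedAddCommGroup (quasiPeriodic n) := (quasiPeriodicCore n).toNormedAddCommGroup
  let : InnerProductSpace ℂ (quasiPeriodic n) := .ofCore (quasiPeriodicCore n).toCore
  have hM : 2 * (2 * Real.pi * n) ≠ 0 := by
    have := Real.pi_ne_zero
    have : (n : ℝ) ≠ 0 := by exact_mod_cast hn
    positivity
  obtain ⟨j, hj⟩ := exists_int_eq_mul_of_hasEigenvalue
    (fun u v => squareIntegral_conj_ladderFun_mul s b 1 u.2 v.2) (ladder_mul_ladder_neg n s b) hM hl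
  exact ⟨j, by rw [hj]; push_cast; rfl⟩

end LadderOperator

/-! ### Fourier modes of solutions -/

section ModeSystem

/-- The system satisfied by the modes `φ(x, y)`, `γ(x, y)` of frequency `k` in `t` and `n` in `z` of
a pair `(f, g)` in `𝒮(a, b)`: `∂/∂t` and `∂/∂z` have become multiplication by `2πi k` and
`2πi n`. -/
structure IsModeSol (a b : ℝ) (k n : ℤ) (φ γ : ℝ × ℝ → ℂ) : Prop where
  eq₁ (p : ℝ × ℝ) : -(1 / 2) * (∂ᵧ φ p + (p.1 - (a + I) / b) * (2 * Real.pi * I * n * φ p)) +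
    (1 / 2) * (2 * Real.pi * I * k * γ p + I * ∂ₓ γ p) + b / 4 * γ p = 0
  eq₂ (p : ℝ × ℝ) : (1 / 2) * (2 * Real.pi * I * k * φ p - I * ∂ₓ φ p) +
    (1 / 2) * (∂ᵧ γ p + (p.1 - (a - I) / b) * (2 * Real.pi * I * n * γ p)) = 0

variable {a b : ℝ} {k n : ℤ} {φ γ : quasiPeriodic n}

theorem IsModeSol.ladder_add (h : IsModeSol a b k n φ γ) :
    ladder n (a / b) b 1 (φ + γ) =
      (2 * Real.pi * k - I * (b / 4 + 2 * Real.pi * n / b) : ℂ) • (φ - γ) := by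
  rw [map_add]
  ext p
  change ladderFun n (a / b) b 1 φ p + ladderFun n (a / b) b 1 γ p = _ * (φ.1 p - γ.1 p)
  simp only [ladderFun, ladderCoeff]
  push_cast
  linear_combination (-2 * I) * h.eq₁ p + (2 * I) * h.eq₂ p +
    (∂ₓ φ.1 p + ∂ₓ γ.1 p - 2 * Real.pi * n * (p.1 - (a + I) / b) * φ.1 p -
      2 * Real.pi * n * (p.1 - (a - I) / b) * γ.1 p + 2 * Real.pi * k * (γ.1 p - φ.1 p)) * I_sq

theorem IsModeSol.ladder_neg_sub (h : IsModeSol a b k n φ γ) :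
    ladder n (a / b) b (-1) (φ - γ) =
      (-(2 * Real.pi * k - I * (b / 4 - 2 * Real.pi * n / b)) : ℂ) • (φ + γ) := by
  rw [map_sub]
  ext p
  change ladderFun n (a / b) b (-1) φ p - ladderFun n (a / b) b (-1) γ p = _ * (φ.1 p + γ.1 p)
  simp only [ladderFun, ladderCoeff]
  push_cast
  linear_combination (-2 * I) * h.eq₁ p - (2 * I) * h.eq₂ p +
    (-∂ₓ φ.1 p + ∂ₓ γ.1 p - 2 * Real.pi * n * (p.1 - (a + I) / b) * φ.1 p +
      2 * Real.pi * n * (p.1 - (a - I) / b) * γ.1 p + 2 * Real.pi * k * (γ.1 p + φ.1 p)) * I_sq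

theorem NonResonant.mul_ne (hres : NonResonant b) (hb : b ≠ 0) (hn : n ≠ 0) (k j : ℤ) :
    (-(2 * Real.pi * k - I * (b / 4 - 2 * Real.pi * n / b)) *
      (2 * Real.pi * k - I * (b / 4 + 2 * Real.pi * n / b)) : ℂ) ≠ 2 * (2 * Real.pi * n) * j := by
  intro h
  have hparts : ((b ^ 2 / 16 - (2 * Real.pi * n) ^ 2 / b ^ 2 - (2 * Real.pi * k) ^ 2 : ℝ) : ℂ) +
      ((Real.pi * k * b : ℝ) : ℂ) * I = ((2 * (2 * Real.pi * n) * j : ℝ) : ℂ) := by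
    push_cast
    linear_combination h + (b ^ 2 / 16 - (2 * Real.pi * n) ^ 2 / b ^ 2 : ℂ) * I_sq
  have him := congrArg Complex.im hparts
  have hre := congrArg Complex.re hparts
  simp only [add_re, add_im, ofReal_re, ofReal_im, re_ofReal_mul, im_ofReal_mul, I_re,
    I_im] at him hre
  have hk : (k : ℝ) = 0 := by
    have : Real.pi * k * b = 0 := by linarith
    simpa [Real.pi_ne_zero, hb] using this
  rw [hk] at hre
  exact hres n hn j (by linear_combination hre)

theorem IsModeSol.eq_zero (h : IsModeSol a b k n φ γ) (hb : b ≠ 0) (hn : n ≠ 0)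
    (hres : NonResonant b) : φ = 0 ∧ γ = 0 := by
  have hadd : φ + γ = 0 := by
    by_contra hne
    have heig : (ladder n (a / b) b (-1) * ladder n (a / b) b 1) (φ + γ) =
        (-(2 * Real.pi * k - I * (b / 4 - 2 * Real.pi * n / b)) *
          (2 * Real.pi * k - I * (b / 4 + 2 * Real.pi * n / b)) : ℂ) • (φ + γ) := by
      rw [Module.End.mul_apply, h.ladder_add, map_smul, h.ladder_neg_sub, smul_smul, mul_comm]
    obtain ⟨j, hj⟩ := exists_int_of_hasEigenvalue_ladder hn (a / b) b
      (Module.End.hasEigenvalue_of_hasEigenvector ⟨Module.End.mem_eigenspace_iff.2 heig, hne⟩)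
    exact hres.mul_ne hb hn k j hj
  have hsub : φ - γ = 0 := by
    have hmul := h.ladder_add
    rw [hadd, map_zero] at hmul
    refine (smul_eq_zero.1 hmul.symm).resolve_left fun hzero => ?_
    exact hres.mul_ne hb hn k 0 (by rw [hzero]; simp)
  have h2γ : (2 : ℂ) • γ = 0 := by rw [← sub_eq_zero.2 (hadd.trans hsub.symm)]; module
  have hγ : γ = 0 := (smul_eq_zero.1 h2γ).resolve_left two_ne_zero
  exact ⟨by rwa [hγ, sub_zero] at hsub, hγ⟩

end ModeSystem

/-! ### Plane waves -/

/-- The system satisfied by the amplitudes `α`, `β` at the frequency `c` in `(x, y)` of a solution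
of `IsModeSol a b k 0`, that is, of a mode of frequency `k` in `t` which is constant in `z`. -/
structure IsWaveSol (b : ℝ) (k : ℤ) (c : ℤ × ℤ) (α β : ℂ) : Prop where
  eq₁ : -(Real.pi * I * c.2 * α) + (Real.pi * I * k - Real.pi * c.1 + b / 4) * β = 0
  eq₂ : (Real.pi * I * k + Real.pi * c.1) * α + Real.pi * I * c.2 * β = 0

section PlaneWave

variable {a b : ℝ} {k : ℤ} {c : ℤ × ℤ} {α β : ℂ}

theorem IsWaveSol.isModeSol (a : ℝ) (h : IsWaveSol b k c α β) :
    IsModeSol a b k 0 (fun p => α * torusChar c p) (fun p => β * torusChar c p) := by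
  have hdiff : Differentiable ℝ (torusChar c) := (contDiff_torusChar c).differentiable (by simp)
  constructor
  all_goals
    intro p
    simp only [dirDeriv_const_mul (hdiff _), dirDeriv_torusChar]
    push_cast
  · linear_combination torusChar c p * h.eq₁ + Real.pi * c.1 * β * torusChar c p * I_sq
  · linear_combination torusChar c p * h.eq₂ - Real.pi * c.1 * α * torusChar c p * I_sq

theorem doublyPeriodic_of_mem_quasiPeriodic_zero {u : ℝ × ℝ → ℂ} (hu : u ∈ quasiPeriodic 0) :
    DoublyPeriodic u :=
  ⟨fun x y => by rw [hu.2.1, neg_zero, circleChar_zero_left, one_mul], hu.2.2⟩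

theorem IsModeSol.isWaveSol_torusCoeff {φ γ : ℝ × ℝ → ℂ} (h : IsModeSol a b k 0 φ γ)
    (hφ : φ ∈ quasiPeriodic 0) (hγ : γ ∈ quasiPeriodic 0) (c : ℤ × ℤ) :
    IsWaveSol b k c (torusCoeff c φ) (torusCoeff c γ) := by
  have sφ := hφ.1
  have sγ := hγ.1
  have dφ := torusCoeff_dirDeriv c sφ (doublyPeriodic_of_mem_quasiPeriodic_zero hφ)
  have dγ := torusCoeff_dirDeriv c sγ (doublyPeriodic_of_mem_quasiPeriodic_zero hγ)
  constructor
  · have heq : (fun p => (-(1 / 2) : ℂ) * ∂ᵧ φ p +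
        ((Real.pi * I * k + b / 4) * γ p + (I / 2) * ∂ₓ γ p)) = fun _ => 0 := by
      ext p
      linear_combination (norm := (push_cast; ring)) h.eq₁ p
    have hcoeff := torusCoeff_zero c
    rw [← heq, torusCoeff_add c (by fun_prop) (by fun_prop),
      torusCoeff_add c (by fun_prop) (by fun_prop)] at hcoeff
    simp only [torusCoeff_const_mul, dφ, dγ] at hcoeff
    push_cast at hcoeff
    linear_combination hcoeff - Real.pi * c.1 * torusCoeff c γ * I_sq
  · have heq : (fun p => (Real.pi * I * k : ℂ) * φ p +
        ((-(I / 2)) * ∂ₓ φ p + (1 / 2) * ∂ᵧ γ p)) = fun _ => 0 := by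
      ext p
      linear_combination (norm := (push_cast; ring)) h.eq₂ p
    have hcoeff := torusCoeff_zero c
    rw [← heq, torusCoeff_add c (by fun_prop) (by fun_prop),
      torusCoeff_add c (by fun_prop) (by fun_prop)] at hcoeff
    simp only [torusCoeff_const_mul, dφ, dγ] at hcoeff
    push_cast at hcoeff
    linear_combination hcoeff + Real.pi * c.1 * torusCoeff c φ * I_sq

theorem IsWaveSol.eq_zero_or_mem_resonantFreq (h : IsWaveSol b k c α β) (hb : b ≠ 0) :
    (α = 0 ∧ β = 0) ∨ k = 0 ∧ c ∈ resonantFreq b := by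
  obtain ⟨l, m⟩ := c
  obtain ⟨h₁, h₂⟩ := h
  -- `D` is the determinant of the system, so that `D α = D β = 0`
  set D : ℂ := ((Real.pi ^ 2 * (m ^ 2 + k ^ 2 + l ^ 2) - b / 4 * Real.pi * l : ℝ) : ℂ) +
    ((-(b / 4 * Real.pi * k) : ℝ) : ℂ) * I with hD
  have hα : D * α = 0 := by
    rw [hD]
    push_cast
    linear_combination (Real.pi * m * I) * h₁ - (Real.pi * (k * I - l) + b / 4) * h₂ +
      Real.pi ^ 2 * (m ^ 2 + k ^ 2) * α * I_sq
  have hβ : D * β = 0 := by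
    rw [hD]
    push_cast
    linear_combination (-(Real.pi * (k * I + l))) * h₁ - (Real.pi * m * I) * h₂ +
      Real.pi ^ 2 * (m ^ 2 + k ^ 2) * β * I_sq
  by_cases hD0 : D = 0
  · refine Or.inr ?_
    have hre := congrArg Complex.re hD0
    have him := congrArg Complex.im hD0
    rw [hD] at hre him
    simp only [add_re, add_im, ofReal_re, ofReal_im, re_ofReal_mul, im_ofReal_mul, I_re, I_im,
      zero_re, zero_im] at hre him
    have hk : (k : ℝ) = 0 := by
      have : b / 4 * Real.pi * k = 0 := by linarith
      simpa [hb, Real.pi_ne_zero] using this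
    refine ⟨by exact_mod_cast hk, ?_⟩
    rw [mem_resonantFreq]
    rw [hk] at hre
    have hpi := Real.pi_pos
    refine mul_left_cancel₀ hpi.ne' ?_
    linear_combination 4 * hre
  · exact Or.inl ⟨(mul_eq_zero.1 hα).resolve_left hD0, (mul_eq_zero.1 hβ).resolve_left hD0⟩

/-- A generator of the solutions of `IsWaveSol b 0 c` at a resonant frequency `c = (l, m)`.
Resonance with `l = 0` forces `m = 0`, and then `α` is free and `β = 0`. -/
noncomputable def waveVec (c : ℤ × ℤ) : ℂ × ℂ :=
  if c.1 = 0 then (1, 0) else (-I * c.2 / c.1, 1)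

theorem waveVec_ne_zero (c : ℤ × ℤ) : waveVec c ≠ 0 := by
  unfold waveVec
  split_ifs <;> simp [Prod.ext_iff]

theorem isWaveSol_waveVec (hc : c ∈ resonantFreq b) :
    IsWaveSol b 0 c (waveVec c).1 (waveVec c).2 := by
  obtain ⟨l, m⟩ := c
  rw [mem_resonantFreq] at hc
  by_cases hl : l = 0
  · have hm : m = 0 := by simpa [hl, Real.pi_ne_zero] using hc
    subst hl hm
    constructor <;> simp [waveVec]
  · have hlC : (l : ℂ) ≠ 0 := by exact_mod_cast hl
    have hcC : (4 * Real.pi * (l ^ 2 + m ^ 2) : ℂ) = b * l := by exact_mod_cast hc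
    simp only [waveVec, hl, if_false]
    constructor
    all_goals
      push_cast
      field_simp
    · linear_combination 4 * Real.pi * m ^ 2 * I_sq - hcC
    · ring

theorem IsWaveSol.exists_eq_mul_waveVec (h : IsWaveSol b 0 c α β) (hb : b ≠ 0) :
    ∃ r : ℂ, α = r * (waveVec c).1 ∧ β = r * (waveVec c).2 := by
  obtain ⟨l, m⟩ := c
  have hpi : (Real.pi : ℂ) ≠ 0 := by exact_mod_cast Real.pi_ne_zero
  have hbC : (b : ℂ) ≠ 0 := by exact_mod_cast hb
  obtain ⟨h₁, h₂⟩ := h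
  by_cases hl : l = 0
  · subst hl
    have hβ : (b / 4 * β ^ 2 : ℂ) = 0 := by
      push_cast at h₁ h₂
      linear_combination β * h₁ + α * h₂
    exact ⟨α, by simp [waveVec], by simpa [waveVec, hbC] using hβ⟩
  · have hlC : (l : ℂ) ≠ 0 := by exact_mod_cast hl
    refine ⟨β, ?_, by simp [waveVec, hl]⟩
    simp only [waveVec, hl, if_false]
    field_simp
    refine mul_left_cancel₀ hpi ?_
    push_cast at h₂
    linear_combination h₂

end PlaneWave

theorem torusChar_add (c : ℤ × ℤ) (p p' : ℝ × ℝ) :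
    torusChar c (p + p') = torusChar c p * torusChar c p' := by
  simp only [torusChar, Prod.fst_add, Prod.snd_add, circleChar_add]
  ring

theorem torusChar_zero_right (c : ℤ × ℤ) : torusChar c 0 = 1 := by
  simp [torusChar, circleChar_zero_right]

theorem torusChar_injective : Function.Injective torusChar := by
  intro c c' h
  have hpi : (Real.pi : ℂ) ≠ 0 := by exact_mod_cast Real.pi_ne_zero
  have hderiv (v : ℝ × ℝ) : (c.1 * v.1 + c.2 * v.2 : ℂ) = c'.1 * v.1 + c'.2 * v.2 := by
    have := dirDeriv_torusChar c v 0
    rw [h, dirDeriv_torusChar, ← h, torusChar_zero_right, mul_one, mul_one] at this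
    exact (mul_left_cancel₀ (mul_ne_zero (mul_ne_zero two_ne_zero hpi) I_ne_zero) this).symm
  have hfst := hderiv (1, 0)
  have hsnd := hderiv (0, 1)
  simp only [ofReal_one, ofReal_zero, mul_one, mul_zero, add_zero, zero_add] at hfst hsnd
  exact Prod.ext (by exact_mod_cast hfst) (by exact_mod_cast hsnd)

theorem linearIndependent_torusChar : LinearIndependent ℂ torusChar := by
  let χ (c : ℤ × ℤ) : Multiplicative (ℝ × ℝ) →* ℂ :=
    { toFun := fun p => torusChar c p.toAdd
      map_one' := torusChar_zero_right c
      map_mul' := fun p p' => torusChar_add c p.toAdd p'.toAdd }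
  have hχ : Function.Injective χ := fun c c' h =>
    torusChar_injective (funext fun p => DFunLike.congr_fun h (Multiplicative.ofAdd p))
  exact (linearIndependent_monoidHom (Multiplicative (ℝ × ℝ)) ℂ).comp χ hχ

/-! ### Functions on the Kodaira–Thurston manifold -/

/-- A function of `(t, x, y, z)` as a function on `ℝ² × ℝ²`, with the base variables `(x, y)` first
and the variables `(t, z)`, in which `KTPeriodic` is plain periodicity, second. -/
def toProd (f : F4) (q : (ℝ × ℝ) × (ℝ × ℝ)) : ℂ := f q.2.1 q.1.1 q.1.2 q.2.2

local notation "𝐭" => ((0 : ℝ × ℝ), ((1 : ℝ), (0 : ℝ)))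
local notation "𝐱" => (((1 : ℝ), (0 : ℝ)), (0 : ℝ × ℝ))
local notation "𝐲" => (((0 : ℝ), (1 : ℝ)), (0 : ℝ × ℝ))
local notation "𝐳" => ((0 : ℝ × ℝ), ((0 : ℝ), (1 : ℝ)))

section Partial

variable {f g : F4}

@[fun_prop]
theorem contDiff_toProd (hf : Smooth4 f) : ContDiff ℝ ∞ (toProd f) :=
  ContDiff.comp (f := fun q : (ℝ × ℝ) × (ℝ × ℝ) => (q.2.1, q.1.1, q.1.2, q.2.2)) hf (by fun_prop)

theorem smooth4_of_contDiff_toProd (hf : ContDiff ℝ ∞ (toProd f)) : Smooth4 f :=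
  hf.comp (f := fun p : ℝ × ℝ × ℝ × ℝ => ((p.2.1, p.2.2.1), (p.1, p.2.2.2))) (by fun_prop)

theorem differentiable_toProd (hf : Smooth4 f) : Differentiable ℝ (toProd f) :=
  (contDiff_toProd hf).differentiable (by simp)

theorem pT_eq_dirDeriv (hf : Smooth4 f) (t x y z : ℝ) :
    pT f t x y z = dirDeriv 𝐭 (toProd f) ((x, y), (t, z)) :=
  (hasDerivAt_comp_dirDeriv (differentiable_toProd hf _) ((hasDerivAt_const t (x, y)).prodMk
    ((hasDerivAt_id t).prodMk (hasDerivAt_const t z)))).deriv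

theorem pX_eq_dirDeriv (hf : Smooth4 f) (t x y z : ℝ) :
    pX f t x y z = dirDeriv 𝐱 (toProd f) ((x, y), (t, z)) :=
  (hasDerivAt_comp_dirDeriv (differentiable_toProd hf _) (((hasDerivAt_id x).prodMk
    (hasDerivAt_const x y)).prodMk (hasDerivAt_const x (t, z)))).deriv

theorem pY_eq_dirDeriv (hf : Smooth4 f) (t x y z : ℝ) :
    pY f t x y z = dirDeriv 𝐲 (toProd f) ((x, y), (t, z)) :=
  (hasDerivAt_comp_dirDeriv (differentiable_toProd hf _) (((hasDerivAt_const y x).prodMk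
    (hasDerivAt_id y)).prodMk (hasDerivAt_const y (t, z)))).deriv

theorem pZ_eq_dirDeriv (hf : Smooth4 f) (t x y z : ℝ) :
    pZ f t x y z = dirDeriv 𝐳 (toProd f) ((x, y), (t, z)) :=
  (hasDerivAt_comp_dirDeriv (differentiable_toProd hf _) ((hasDerivAt_const z (x, y)).prodMk
    ((hasDerivAt_const z t).prodMk (hasDerivAt_id z)))).deriv

/-- The smooth functions on the Kodaira–Thurston manifold. -/
def smoothKT : Submodule ℂ F4 where
  carrier := {f | Smooth4 f ∧ KTPeriodic f}
  add_mem' := fun {f g} hf hg => ⟨ContDiff.add hf.1 hg.1, fun t x y z => by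
    simp only [Pi.add_apply, hf.2 t x y z, hg.2 t x y z, and_self]⟩
  zero_mem' := ⟨contDiff_const, fun t x y z => ⟨rfl, rfl, rfl, rfl⟩⟩
  smul_mem' := fun c f hf => ⟨ContDiff.mul contDiff_const hf.1, fun t x y z => by
    simp only [Pi.smul_apply, hf.2 t x y z, and_self]⟩

theorem mem_sol_iff {a b : ℝ} : (f, g) ∈ Sol a b ↔ f ∈ smoothKT ∧ g ∈ smoothKT ∧
    ∀ q, -(1 / 2) * (dirDeriv 𝐲 (toProd f) q +
          (q.1.1 - (a + I) / b) * dirDeriv 𝐳 (toProd f) q) +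
        (1 / 2) * (dirDeriv 𝐭 (toProd g) q + I * dirDeriv 𝐱 (toProd g) q) +
        b / 4 * toProd g q = 0 ∧
      (1 / 2) * (dirDeriv 𝐭 (toProd f) q - I * dirDeriv 𝐱 (toProd f) q) +
        (1 / 2) * (dirDeriv 𝐲 (toProd g) q +
          (q.1.1 - (a - I) / b) * dirDeriv 𝐳 (toProd g) q) = 0 := by
  constructor
  · rintro ⟨hf, hg, pf, pg, h₁, h₂⟩
    simp only [V₁, V₁c, V₂, V₂c, pT_eq_dirDeriv hf, pX_eq_dirDeriv hf, pY_eq_dirDeriv hf,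
      pZ_eq_dirDeriv hf, pT_eq_dirDeriv hg, pX_eq_dirDeriv hg, pY_eq_dirDeriv hg,
      pZ_eq_dirDeriv hg] at h₁ h₂
    refine ⟨⟨hf, pf⟩, ⟨hg, pg⟩, fun ⟨⟨x, y⟩, ⟨t, z⟩⟩ => ⟨?_, ?_⟩⟩
    · linear_combination (norm := (simp only [toProd]; ring)) h₁ t x y z
    · linear_combination h₂ t x y z
  · rintro ⟨⟨hf, pf⟩, ⟨hg, pg⟩, h⟩
    refine ⟨hf, hg, pf, pg, fun t x y z => ?_, fun t x y z => ?_⟩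
    all_goals simp only [V₁, V₁c, V₂, V₂c, pT_eq_dirDeriv hf, pX_eq_dirDeriv hf,
      pY_eq_dirDeriv hf, pZ_eq_dirDeriv hf, pT_eq_dirDeriv hg, pX_eq_dirDeriv hg,
      pY_eq_dirDeriv hg, pZ_eq_dirDeriv hg]
    · linear_combination (norm := (simp only [toProd]; ring)) (h ((x, y), (t, z))).1
    · linear_combination (h ((x, y), (t, z))).2

theorem dirDeriv_toProd_add (hf : Smooth4 f) (hg : Smooth4 g) (v q : (ℝ × ℝ) × (ℝ × ℝ)) :
    dirDeriv v (toProd (f + g)) q = dirDeriv v (toProd f) q + dirDeriv v (toProd g) q :=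
  dirDeriv_add (differentiable_toProd hf q) (differentiable_toProd hg q) v

theorem dirDeriv_toProd_smul (hf : Smooth4 f) (c : ℂ) (v q : (ℝ × ℝ) × (ℝ × ℝ)) :
    dirDeriv v (toProd (c • f)) q = c * dirDeriv v (toProd f) q :=
  dirDeriv_const_mul (differentiable_toProd hf q) c v

/-- The set `𝒮(a, b)` as a subspace. -/
def solSubmodule (a b : ℝ) : Submodule ℂ (F4 × F4) where
  carrier := Sol a b
  add_mem' := by
    rintro ⟨f, g⟩ ⟨f', g'⟩ h h'
    obtain ⟨hf, hg, heq⟩ := mem_sol_iff.1 h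
    obtain ⟨hf', hg', heq'⟩ := mem_sol_iff.1 h'
    refine mem_sol_iff.2 ⟨add_mem hf hf', add_mem hg hg', fun q => ?_⟩
    have hval : toProd (g + g') q = toProd g q + toProd g' q := rfl
    simp only [dirDeriv_toProd_add hf.1 hf'.1, dirDeriv_toProd_add hg.1 hg'.1, hval]
    exact ⟨by linear_combination (heq q).1 + (heq' q).1,
      by linear_combination (heq q).2 + (heq' q).2⟩
  zero_mem' := by
    refine mem_sol_iff.2 ⟨zero_mem _, zero_mem _, fun q => ?_⟩
    have hzero : toProd 0 = fun _ => 0 := rfl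
    simp [hzero, dirDeriv_const]
  smul_mem' := by
    rintro c ⟨f, g⟩ h
    obtain ⟨hf, hg, heq⟩ := mem_sol_iff.1 h
    refine mem_sol_iff.2 ⟨Submodule.smul_mem _ c hf, Submodule.smul_mem _ c hg, fun q => ?_⟩
    have hval : toProd (c • g) q = c * toProd g q := rfl
    simp only [dirDeriv_toProd_smul hf.1, dirDeriv_toProd_smul hg.1, hval]
    exact ⟨by linear_combination c * (heq q).1, by linear_combination c * (heq q).2⟩

end Partial

section Modes

variable {a b : ℝ} {f g : F4}

/-- The Fourier mode of `f` of frequency `c = (k, n)` in `(t, z)`, a function of `(x, y)`. -/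
noncomputable def modeFun (c : ℤ × ℤ) (f : F4) (p : ℝ × ℝ) : ℂ :=
  torusCoeff c fun q => toProd f (p, q)

theorem doublyPeriodic_toProd (hf : KTPeriodic f) (p : ℝ × ℝ) :
    DoublyPeriodic fun q => toProd f (p, q) :=
  ⟨fun t z => (hf t p.1 p.2 z).1, fun t z => (hf t p.1 p.2 z).2.2.2⟩

theorem modeFun_mem_quasiPeriodic (c : ℤ × ℤ) (hf : f ∈ smoothKT) :
    modeFun c f ∈ quasiPeriodic c.2 := by
  obtain ⟨hf, hp⟩ := hf
  refine ⟨contDiff_torusCoeff c (contDiff_toProd hf), fun x y => ?_, fun x y => ?_⟩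
  · have hshift (t : ℝ) : circleCoeff c.2 (fun z => f t (x + 1) y z) =
        circleChar (-c.2) y * circleCoeff c.2 fun z => f t x y z := by
      rw [← circleCoeff_comp_sub c.2 (fun z => (hp t x y z).2.2.2)]
      congr 1
      ext z
      simpa only [sub_add_cancel] using (hp t x y (z - y)).2.1
    simp only [modeFun, toProd, torusCoeff_eq_circleCoeff, hshift, circleCoeff_const_mul]
  · simp only [modeFun, toProd, (hp _ x y _).2.2.1]

theorem torusCoeff_dirDeriv_base (c : ℤ × ℤ) (hf : Smooth4 f) (v p : ℝ × ℝ) :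
    (torusCoeff c fun q => dirDeriv (v, 0) (toProd f) (p, q)) = dirDeriv v (modeFun c f) p :=
  (dirDeriv_torusCoeff c (contDiff_toProd hf) v p).symm

theorem torusCoeff_dirDeriv_fiber (c : ℤ × ℤ) (hf : f ∈ smoothKT) (v p : ℝ × ℝ) :
    (torusCoeff c fun q => dirDeriv (0, v) (toProd f) (p, q)) =
      2 * Real.pi * I * (c.1 * v.1 + c.2 * v.2) * modeFun c f p := by
  have hsmooth := contDiff_toProd hf.1
  have hslice : dirDeriv v (fun q => toProd f (p, q)) =
      fun q => dirDeriv (0, v) (toProd f) (p, q) := by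
    ext q
    exact congrArg (· v) ((hsmooth.differentiable (by simp) (p, q)).hasFDerivAt.comp q
      (hasFDerivAt_prodMk_right p q)).fderiv
  rw [← hslice, torusCoeff_dirDeriv c (by fun_prop) (doublyPeriodic_toProd hf.2 p)]
  rfl

theorem isModeSol_modeFun (h : (f, g) ∈ Sol a b) (c : ℤ × ℤ) :
    IsModeSol a b c.1 c.2 (modeFun c f) (modeFun c g) := by
  obtain ⟨hf, hg, heq⟩ := mem_sol_iff.1 h
  have sf := contDiff_toProd hf.1
  have sg := contDiff_toProd hg.1
  have hval (p : ℝ × ℝ) : (torusCoeff c fun q => toProd g (p, q)) = modeFun c g p := rfl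
  constructor <;> intro p
  · have hzero : (fun q => -(1 / 2) * dirDeriv 𝐲 (toProd f) (p, q) +
        ((-(1 / 2) * (p.1 - (a + I) / b)) * dirDeriv 𝐳 (toProd f) (p, q) +
        ((1 / 2) * dirDeriv 𝐭 (toProd g) (p, q) + ((I / 2) * dirDeriv 𝐱 (toProd g) (p, q) +
        (b / 4) * toProd g (p, q))))) = fun _ => 0 := by
      ext q
      linear_combination (heq (p, q)).1
    have hcoeff := torusCoeff_zero c
    rw [← hzero, torusCoeff_add c (by fun_prop) (by fun_prop),
      torusCoeff_add c (by fun_prop) (by fun_prop), torusCoeff_add c (by fun_prop) (by fun_prop),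
      torusCoeff_add c (by fun_prop) (by fun_prop)] at hcoeff
    simp only [torusCoeff_const_mul, torusCoeff_dirDeriv_base c hf.1,
      torusCoeff_dirDeriv_base c hg.1, torusCoeff_dirDeriv_fiber c hf,
      torusCoeff_dirDeriv_fiber c hg, hval] at hcoeff
    push_cast at hcoeff
    linear_combination hcoeff
  · have hzero : (fun q => (1 / 2) * dirDeriv 𝐭 (toProd f) (p, q) +
        ((-(I / 2)) * dirDeriv 𝐱 (toProd f) (p, q) + ((1 / 2) * dirDeriv 𝐲 (toProd g) (p, q) +
        (1 / 2 * (p.1 - (a - I) / b)) * dirDeriv 𝐳 (toProd g) (p, q)))) = fun _ => 0 := by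
      ext q
      linear_combination (heq (p, q)).2
    have hcoeff := torusCoeff_zero c
    rw [← hzero, torusCoeff_add c (by fun_prop) (by fun_prop),
      torusCoeff_add c (by fun_prop) (by fun_prop),
      torusCoeff_add c (by fun_prop) (by fun_prop)] at hcoeff
    simp only [torusCoeff_const_mul, torusCoeff_dirDeriv_base c hf.1,
      torusCoeff_dirDeriv_base c hg.1, torusCoeff_dirDeriv_fiber c hf,
      torusCoeff_dirDeriv_fiber c hg] at hcoeff
    push_cast at hcoeff
    linear_combination hcoeff

end Modes

/-! ### The solution space -/

/-- The function on `KT⁴` depending only on `(x, y)` given by a function on the torus. -/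
def pullback (φ : ℝ × ℝ → ℂ) : F4 := fun _ x y _ => φ (x, y)

section Pullback

variable {a b : ℝ} {φ γ : ℝ × ℝ → ℂ}

theorem pullback_mem_smoothKT (hφ : ContDiff ℝ ∞ φ) (hp : DoublyPeriodic φ) :
    pullback φ ∈ smoothKT :=
  ⟨smooth4_of_contDiff_toProd (hφ.comp contDiff_fst),
    fun _ x y _ => ⟨rfl, hp.1 x y, hp.2 x y, rfl⟩⟩

theorem dirDeriv_toProd_pullback (hφ : Differentiable ℝ φ) (v q : (ℝ × ℝ) × (ℝ × ℝ)) :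
    dirDeriv v (toProd (pullback φ)) q = dirDeriv v.1 φ q.1 :=
  congrArg (· v) ((hφ q.1).hasFDerivAt.comp q (hasFDerivAt_fst (𝕜 := ℝ))).fderiv

theorem pullback_mem_sol (h : IsModeSol a b 0 0 φ γ) (hφ : ContDiff ℝ ∞ φ)
    (hφp : DoublyPeriodic φ) (hγ : ContDiff ℝ ∞ γ) (hγp : DoublyPeriodic γ) :
    (pullback φ, pullback γ) ∈ Sol a b := by
  refine mem_sol_iff.2 ⟨pullback_mem_smoothKT hφ hφp, pullback_mem_smoothKT hγ hγp, fun q => ?_⟩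
  have hzero (u : ℝ × ℝ → ℂ) : dirDeriv 0 u q.1 = 0 := map_zero _
  have hval : toProd (pullback γ) q = γ q.1 := rfl
  simp only [dirDeriv_toProd_pullback (hφ.differentiable (by simp)),
    dirDeriv_toProd_pullback (hγ.differentiable (by simp)), hzero, hval]
  constructor
  · linear_combination (norm := (push_cast; ring)) h.eq₁ q.1
  · linear_combination (norm := (push_cast; ring)) h.eq₂ q.1

theorem eq_pullback_modeFun {f : F4} (hf : f ∈ smoothKT) (h : ∀ c ≠ 0, modeFun c f = 0) :
    f = pullback (modeFun (0, 0) f) := by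
  have hsmooth := contDiff_toProd hf.1
  ext t x y z
  have hsum := eq_sum_torusCoeff (u := fun q => toProd f ((x, y), q)) (by fun_prop)
    (doublyPeriodic_toProd hf.2 (x, y)) (T := {(0, 0)})
    (fun c hc => congrFun (h c (Finset.notMem_singleton.1 hc)) (x, y)) (t, z)
  rwa [Finset.sum_singleton, torusChar, circleChar_zero_left, circleChar_zero_left, mul_one,
    mul_one] at hsum

end Pullback

/-- The plane wave of frequency `c` in `(x, y)` with amplitude `waveVec c`. -/
noncomputable def basicSol (c : ℤ × ℤ) : F4 × F4 :=
  (pullback fun p => (waveVec c).1 * torusChar c p, pullback fun p => (waveVec c).2 * torusChar c p)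

theorem basicSol_mem_sol (a : ℝ) {b : ℝ} {c : ℤ × ℤ} (hc : c ∈ resonantFreq b) :
    basicSol c ∈ Sol a b := by
  have hχ := doublyPeriodic_torusChar c
  have hper (w : ℂ) : DoublyPeriodic fun p => w * torusChar c p :=
    ⟨fun x y => by simp only [hχ.1], fun x y => by simp only [hχ.2]⟩
  exact pullback_mem_sol ((isWaveSol_waveVec hc).isModeSol a) (by fun_prop) (hper _) (by fun_prop)
    (hper _)

theorem linearIndependent_basicSol : LinearIndependent ℂ basicSol := by
  have hχ := linearIndependent_iff'.1 linearIndependent_torusChar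
  refine linearIndependent_iff'.2 fun s r hr c hc => ?_
  have hfst : r c * (waveVec c).1 = 0 := by
    refine hχ s (fun c => r c * (waveVec c).1) (funext fun p => ?_) c hc
    have := congrFun (congrFun (congrFun (congrFun (congrArg Prod.fst hr) 0) p.1) p.2) 0
    simpa [Prod.fst_sum, basicSol, pullback, mul_assoc] using this
  have hsnd : r c * (waveVec c).2 = 0 := by
    refine hχ s (fun c => r c * (waveVec c).2) (funext fun p => ?_) c hc
    have := congrFun (congrFun (congrFun (congrFun (congrArg Prod.snd hr) 0) p.1) p.2) 0
    simpa [Prod.snd_sum, basicSol, pullback, mul_assoc] using this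
  exact (smul_eq_zero.1 (Prod.ext hfst hsnd : r c • waveVec c = 0)).resolve_right
    (waveVec_ne_zero c)

section SolutionSpace

variable {a b : ℝ} {f g : F4}

theorem isWaveSol_of_mem_sol (h : (f, g) ∈ Sol a b) (k : ℤ) (c : ℤ × ℤ) :
    IsWaveSol b k c (torusCoeff c (modeFun (k, 0) f)) (torusCoeff c (modeFun (k, 0) g)) := by
  obtain ⟨hf, hg, -⟩ := mem_sol_iff.1 h
  have hmode : IsModeSol a b k 0 (modeFun (k, 0) f) (modeFun (k, 0) g) :=
    isModeSol_modeFun h (k, 0)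
  exact hmode.isWaveSol_torusCoeff (modeFun_mem_quasiPeriodic (k, 0) hf)
    (modeFun_mem_quasiPeriodic (k, 0) hg) c

theorem eq_sum_torusCoeff_modeFun (hf : f ∈ smoothKT) {k : ℤ} {T : Finset (ℤ × ℤ)}
    (hT : ∀ c ∉ T, torusCoeff c (modeFun (k, 0) f) = 0) (p : ℝ × ℝ) :
    modeFun (k, 0) f p = ∑ c ∈ T, torusCoeff c (modeFun (k, 0) f) * torusChar c p :=
  have hmode := modeFun_mem_quasiPeriodic (k, 0) hf
  eq_sum_torusCoeff hmode.1.continuous (doublyPeriodic_of_mem_quasiPeriodic_zero hmode) hT p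

theorem modeFun_eq_zero_of_mem_sol (h : (f, g) ∈ Sol a b) (hb : b ≠ 0) (hres : NonResonant b)
    {c : ℤ × ℤ} (hc : c ≠ 0) : modeFun c f = 0 ∧ modeFun c g = 0 := by
  obtain ⟨k, n⟩ := c
  obtain ⟨hf, hg, -⟩ := mem_sol_iff.1 h
  by_cases hn : n = 0
  · subst hn
    have hk : k ≠ 0 := fun hk => hc (by rw [hk]; rfl)
    have hcoeff (c : ℤ × ℤ) := ((isWaveSol_of_mem_sol h k c).eq_zero_or_mem_resonantFreq
      hb).resolve_right fun hres => hk hres.1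
    constructor <;> ext p
    · rw [eq_sum_torusCoeff_modeFun hf (T := ∅) (fun c _ => (hcoeff c).1), Finset.sum_empty]
      rfl
    · rw [eq_sum_torusCoeff_modeFun hg (T := ∅) (fun c _ => (hcoeff c).2), Finset.sum_empty]
      rfl
  · have hmode : IsModeSol a b k n
        (⟨_, modeFun_mem_quasiPeriodic (k, n) hf⟩ : quasiPeriodic n)
        (⟨_, modeFun_mem_quasiPeriodic (k, n) hg⟩ : quasiPeriodic n) := isModeSol_modeFun h (k, n)
    have hzero := hmode.eq_zero hb hn hres
    exact ⟨congrArg Subtype.val hzero.1, congrArg Subtype.val hzero.2⟩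

theorem exists_eq_sum_basicSol (h : (f, g) ∈ Sol a b) (hb : b ≠ 0) (hres : NonResonant b) :
    ∃ r : ℤ × ℤ → ℂ, (f, g) = ∑ c ∈ (finite_resonantFreq b).toFinset, r c • basicSol c := by
  obtain ⟨hf, hg, -⟩ := mem_sol_iff.1 h
  have hwave := isWaveSol_of_mem_sol h 0
  choose r hrf hrg using fun c => (hwave c).exists_eq_mul_waveVec hb
  have hoff (c : ℤ × ℤ) (hc : c ∉ (finite_resonantFreq b).toFinset) :=
    ((hwave c).eq_zero_or_mem_resonantFreq hb).resolve_right fun hmem =>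
      hc ((finite_resonantFreq b).mem_toFinset.2 hmem.2)
  have hfsum := eq_sum_torusCoeff_modeFun hf (fun c hc => (hoff c hc).1)
  have hgsum := eq_sum_torusCoeff_modeFun hg (fun c hc => (hoff c hc).2)
  refine ⟨r, Prod.ext ?_ ?_⟩
  · rw [eq_pullback_modeFun hf fun c hc => (modeFun_eq_zero_of_mem_sol h hb hres hc).1]
    ext t x y z
    simp only [Prod.fst_sum, Finset.sum_apply, pullback, hfsum, hrf, mul_assoc]
    rfl
  · rw [eq_pullback_modeFun hg fun c hc => (modeFun_eq_zero_of_mem_sol h hb hres hc).2]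
    ext t x y z
    simp only [Prod.snd_sum, Finset.sum_apply, pullback, hgsum, hrg, mul_assoc]
    rfl

theorem hasDimOver_sol (a : ℝ) (hb : b ≠ 0) (hres : NonResonant b) :
    HasDimOver (Sol a b) (resonantFreq b).ncard := by
  have := (finite_resonantFreq b).to_subtype
  let e : resonantFreq b ≃ Fin (resonantFreq b).ncard := Finite.equivFinOfCardEq rfl
  refine ⟨fun i => basicSol (e.symm i), linearIndependent_basicSol.comp _
    (Subtype.val_injective.comp e.symm.injective), Set.Subset.antisymm ?_ ?_⟩
  · refine Submodule.span_le (p := solSubmodule a b).2 ?_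
    rintro _ ⟨i, rfl⟩
    exact basicSol_mem_sol a (e.symm i).2
  · rintro ⟨f, g⟩ h
    obtain ⟨r, hr⟩ := exists_eq_sum_basicSol h hb hres
    rw [hr]
    refine Submodule.sum_mem _ fun c hc => Submodule.smul_mem _ _ (Submodule.subset_span ?_)
    exact ⟨e ⟨c, (finite_resonantFreq b).mem_toFinset.1 hc⟩, by simp⟩

end SolutionSpace

/-- Holt–Zhang: for `b = 8πp/q` with `gcd(p,q) = 1`, `p ≠ 0`,
`1 ≤ q ≤ 5`, and `p² = 2^α₀ · ∏ pᵢ^αᵢ · ∏ qⱼ^βⱼ` with the `pᵢ` distinct primes `≡ 3 (mod 4)`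
and the `qⱼ` distinct primes `≡ 1 (mod 4)`, the space `𝒮(a,b)` is finite dimensional of
dimension `4∏(βⱼ+1)`, `2∏(βⱼ+1)`, or `∏(βⱼ+1)` according to `q = 1`, `q = 2`, or `q ∈ {3,4,5}`. -/
theorem hodge_number_h01_of_rational_d
    (a : ℝ) (p q : ℤ) (hcop : IsCoprime p q) (hp : p ≠ 0) (hq1 : 1 ≤ q) (hq5 : q ≤ 5)
    (b : ℝ) (hb : b = 8 * Real.pi * (p : ℝ) / (q : ℝ))
    (α₀ s t : ℕ) (pr : Fin s → ℕ) (α : Fin s → ℕ) (qr : Fin t → ℕ) (β : Fin t → ℕ)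
    (hprP : ∀ i, Nat.Prime (pr i)) (hpr3 : ∀ i, pr i % 4 = 3)
    (hprInj : Function.Injective pr)
    (hqrP : ∀ j, Nat.Prime (qr j)) (hqr1 : ∀ j, qr j % 4 = 1)
    (hqrInj : Function.Injective qr)
    (hfact : p ^ 2 =
      2 ^ α₀ * (∏ i, (pr i : ℤ) ^ α i) * ∏ j, (qr j : ℤ) ^ β j) :
    HasDimOver (Sol a b)
      ((if q = 1 then 4 else if q = 2 then 2 else 1) * ∏ j, (β j + 1)) := by
  subst hb
  rw [← ncard_resonantFreq hcop hq1 hq5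
    (ncard_norm_eq_sq hprP hpr3 hprInj hqrP hqr1 hqrInj hfact)]
  have hr : (8 * p / q : ℚ) ≠ 0 :=
    div_ne_zero (mul_ne_zero (by norm_num) (Int.cast_ne_zero.2 hp)) (Int.cast_ne_zero.2 (by lia))
  have hb : 8 * Real.pi * p / q = ((8 * p / q : ℚ) : ℝ) * Real.pi := by
    push_cast
    ring
  rw [hb]
  exact hasDimOver_sol a (mul_ne_zero (Rat.cast_ne_zero.2 hr) Real.pi_ne_zero)
    (nonResonant_mul_pi hr)
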